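/- arXiv:math/0512345 — 12 statements merged into one kernel-verified Lean document; each statement's English description precedes it below -/
import Mathlib

section
/- Let β < 0 and let f be a non-constant solution of equation (1) on an interval J. If there exists τ ∈ J with f''(τ) ≤ 0, then f''(t) < 0 for every t ∈ J with t > τ. -/
lemma energy_zero (a b C : ℝ) (E E' : ℝ → ℝ)
    (hE : ∀ x ∈ Set.Icc a b, HasDerivAt E (E' x) x)
    (hpos : ∀ x ∈ Set.Icc a b, 0 ≤ E x)
    (hC : ∀ x ∈ Set.Icc a b, |E' x| ≤ C * E x)
    (s : ℝ) (hs : s ∈ Set.Icc a b) (hs0 : E s = 0) :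
    ∀ x ∈ Set.Icc a b, E x = 0 := by
  have key : ∀ k : ℝ, ∀ x ∈ Set.Icc a b,
      HasDerivAt (fun y => E y * Real.exp (k * y))
        ((E' x + k * E x) * Real.exp (k * x)) x := by
    intro k x hx
    have h1 : HasDerivAt (fun y : ℝ => Real.exp (k * y)) (Real.exp (k * x) * (k * 1)) x :=
      ((hasDerivAt_id x).const_mul k).exp
    refine ((hE x hx).mul h1).congr_deriv ?_
    ring
  have hmono : MonotoneOn (fun y => E y * Real.exp (C * y)) (Set.Icc a b) := by
    apply monotoneOn_of_deriv_nonneg (convex_Icc a b)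
    · exact fun x hx => (key C x hx).continuousAt.continuousWithinAt
    · exact fun x hx => (key C x (interior_subset hx)).differentiableAt.differentiableWithinAt
    · intro x hx
      have hx := interior_subset hx
      rw [(key C x hx).deriv]
      have := abs_le.1 (hC x hx)
      exact mul_nonneg (by linarith) (Real.exp_pos _).le
  have hanti : AntitoneOn (fun y => E y * Real.exp (-C * y)) (Set.Icc a b) := by
    apply antitoneOn_of_deriv_nonpos (convex_Icc a b)
    · exact fun x hx => (key (-C) x hx).continuousAt.continuousWithinAt
    · exact fun x hx => (key (-C) x (interior_subset hx)).differentiableAt.differentiableWithinAt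
    · intro x hx
      have hx := interior_subset hx
      rw [(key (-C) x hx).deriv]
      have := abs_le.1 (hC x hx)
      exact mul_nonpos_of_nonpos_of_nonneg (by linarith) (Real.exp_pos _).le
  intro x hx
  apply le_antisymm _ (hpos x hx)
  rcases le_total x s with h | h
  · have := hmono hx hs h
    simp only [hs0, zero_mul] at this
    by_contra! hc
    have := mul_pos hc (Real.exp_pos (C * x))
    linarith
  · have := hanti hs hx h
    simp only [hs0, zero_mul] at this
    by_contra! hc
    have := mul_pos hc (Real.exp_pos (-C * x))
    linarith

/-- Lemma 1: Let β < 0 and let f be a non-constant solution of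
f''' + f·f'' − β·(f')² = 0 on an interval J.  If f''(τ) ≤ 0 for some τ ∈ J,
then f''(t) < 0 for every t ∈ J with t > τ. -/
theorem stmt_0 (β : ℝ) (hβ : β < 0) (J : Set ℝ) (hJ : J.OrdConnected)
    (f f' f'' f''' : ℝ → ℝ)
    (hf1 : ∀ t ∈ J, HasDerivAt f (f' t) t)
    (hf2 : ∀ t ∈ J, HasDerivAt f' (f'' t) t)
    (hf3 : ∀ t ∈ J, HasDerivAt f'' (f''' t) t)
    (heq : ∀ t ∈ J, f''' t + f t * f'' t - β * (f' t) ^ 2 = 0)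
    (hnc : ¬ ∃ c : ℝ, ∀ t ∈ J, f t = c)
    (τ : ℝ) (hτ : τ ∈ J) (hττ : f'' τ ≤ 0) :
    ∀ t ∈ J, τ < t → f'' t < 0 := by
  intro t ht hlt
  by_contra! hcon
  have hsub : Set.Icc τ t ⊆ J := hJ.out hτ ht
  -- antiderivative
  have hfc : ContinuousOn f (Set.Icc τ t) :=
    fun x hx => (hf1 x (hsub hx)).continuousAt.continuousWithinAt
  obtain ⟨F, hF⟩ : ∃ F : ℝ → ℝ, ∀ x ∈ Set.Icc τ t, HasDerivAt F (f x) x := by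
    have hg : Continuous (Set.IccExtend hlt.le ((Set.Icc τ t).domRestrict f)) :=
      (continuousOn_iff_continuous_domRestrict.1 hfc).Icc_extend'
    refine ⟨fun x => ∫ y in τ..x, Set.IccExtend hlt.le ((Set.Icc τ t).domRestrict f) y, ?_⟩
    intro x hx
    have := hg.integral_hasStrictDerivAt τ x |>.hasDerivAt
    rwa [Set.IccExtend_of_mem hlt.le _ hx] at this
  have hG : ∀ x ∈ Set.Icc τ t, HasDerivAt (fun y => f'' y * Real.exp (F y))
      (β * f' x ^ 2 * Real.exp (F x)) x := by
    intro x hx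
    refine ((hf3 x (hsub hx)).mul (hF x hx).exp).congr_deriv ?_
    have := heq x (hsub hx)
    linear_combination (Real.exp (F x)) * this
  have hanti : AntitoneOn (fun y => f'' y * Real.exp (F y)) (Set.Icc τ t) := by
    apply antitoneOn_of_deriv_nonpos (convex_Icc τ t)
    · exact fun x hx => (hG x hx).continuousAt.continuousWithinAt
    · exact fun x hx => (hG x (interior_subset hx)).differentiableAt.differentiableWithinAt
    · intro x hx
      rw [(hG x (interior_subset hx)).deriv]
      exact mul_nonpos_of_nonpos_of_nonneg
        (mul_nonpos_of_nonpos_of_nonneg hβ.le (sq_nonneg _)) (Real.exp_pos _).le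
  have hτm : τ ∈ Set.Icc τ t := ⟨le_rfl, hlt.le⟩
  have htm : t ∈ Set.Icc τ t := ⟨hlt.le, le_rfl⟩
  have hzero : ∀ x ∈ Set.Icc τ t, f'' x = 0 := by
    intro x hx
    have h1 := hanti hτm hx hx.1
    have h2 := hanti hx htm hx.2
    have h3 : f'' τ * Real.exp (F τ) ≤ 0 :=
      mul_nonpos_of_nonpos_of_nonneg hττ (Real.exp_pos _).le
    have h4 : 0 ≤ f'' t * Real.exp (F t) := mul_nonneg hcon (Real.exp_pos _).le
    simp only at h1 h2
    have h5 : f'' x * Real.exp (F x) = 0 := by linarith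
    exact (mul_eq_zero.1 h5).resolve_right (Real.exp_pos _).ne'
  obtain ⟨m, hm1, hm2⟩ := exists_between hlt
  have hmJ : m ∈ J := hsub ⟨hm1.le, hm2.le⟩
  have hm0 : f'' m = 0 := hzero m ⟨hm1.le, hm2.le⟩
  have hm3 : f''' m = 0 := by
    have h0 : HasDerivAt f'' 0 m := by
      refine (hasDerivAt_const m (0:ℝ)).congr_of_eventuallyEq ?_
      filter_upwards [Icc_mem_nhds hm1 hm2] with x hx using hzero x hx
    exact (hf3 m hmJ).unique h0
  have hmu : f' m = 0 := by
    have := heq m hmJ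
    rw [hm3, hm0] at this
    have h2 : β * f' m ^ 2 = 0 := by linarith
    exact pow_eq_zero_iff (two_ne_zero) |>.1 ((mul_eq_zero.1 h2).resolve_left hβ.ne)
  -- uniqueness
  have hall : ∀ a b : ℝ, Set.Icc a b ⊆ J → m ∈ Set.Icc a b → ∀ x ∈ Set.Icc a b, f' x = 0 := by
    intro a b hab hmab x hx
    have hc1 : ContinuousOn f (Set.Icc a b) :=
      fun x hx => (hf1 x (hab hx)).continuousAt.continuousWithinAt
    have hc2 : ContinuousOn f' (Set.Icc a b) :=
      fun x hx => (hf2 x (hab hx)).continuousAt.continuousWithinAt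
    obtain ⟨A, hA⟩ := isCompact_Icc.exists_bound_of_continuousOn hc1
    obtain ⟨B, hB⟩ := isCompact_Icc.exists_bound_of_continuousOn hc2
    have := energy_zero a b (1 + 2 * A + (-β) * B) (fun y => f' y ^ 2 + f'' y ^ 2)
      (fun y => 2 * f' y * f'' y + 2 * f'' y * f''' y)
      (by
        intro y hy
        refine (((hf2 y (hab hy)).pow 2).add ((hf3 y (hab hy)).pow 2)).congr_deriv ?_
        norm_num)
      (fun y _ => by positivity)
      (by
        intro y hy
        have e1 := hA y hy
        have e2 := hB y hy
        rw [Real.norm_eq_abs] at e1 e2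
        have e3 : f''' y = -(f y * f'' y) + β * f' y ^ 2 := by
          linarith [heq y (hab hy)]
        have e4 : 2 * f' y * f'' y + 2 * f'' y * f''' y =
          (1 + β * f' y) * (2 * f' y * f'' y) - 2 * f y * f'' y ^ 2 := by
          rw [e3]; ring
        have huv : |2 * f' y * f'' y| ≤ f' y ^ 2 + f'' y ^ 2 := by
          rw [abs_le]; constructor <;> nlinarith [sq_nonneg (f' y + f'' y), sq_nonneg (f' y - f'' y)]
        have h1 : |1 + β * f' y| ≤ 1 + (-β) * B := by
          calc |1 + β * f' y| ≤ |1| + |β * f' y| := abs_add_le _ _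
            _ = 1 + (-β) * |f' y| := by rw [abs_one, abs_mul, abs_of_neg hβ]
            _ ≤ _ := by nlinarith
        have h2 : |2 * f y * f'' y ^ 2| ≤ 2 * A * (f' y ^ 2 + f'' y ^ 2) := by
          rw [abs_mul, abs_mul, abs_two, abs_of_nonneg (sq_nonneg (f'' y))]
          have := abs_nonneg (f y)
          apply mul_le_mul <;> nlinarith [sq_nonneg (f' y), sq_nonneg (f'' y)]
        have h3 := mul_le_mul h1 huv (abs_nonneg _) ((abs_nonneg _).trans h1)
        rw [← abs_mul] at h3
        rw [e4]
        refine (abs_sub _ _).trans ?_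
        linarith)
      m hmab (by simp [hmu, hm0]) x hx
    nlinarith [sq_nonneg (f' x), sq_nonneg (f'' x)]
  apply hnc
  refine ⟨f m, fun x hx => ?_⟩
  have hsubx : Set.uIcc m x ⊆ J := hJ.uIcc_subset hmJ hx
  have hd : ∀ y ∈ Set.uIcc m x, f' y = 0 := hall _ _ hsubx Set.left_mem_uIcc
  have := (convex_uIcc m x).norm_image_sub_le_of_norm_hasDerivWithin_le (C := 0)
    (fun y hy => (hf1 y (hsubx hy)).hasDerivWithinAt)
    (fun y hy => by simp [hd y hy]) Set.left_mem_uIcc Set.right_mem_uIcc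
  rw [zero_mul, norm_le_zero_iff] at this
  linarith
end

section
/- Let β < 0 and let f be a non-constant solution of equation (1) on an interval [t₀, ∞) satisfying condition (2). Then there exists t₁ ≥ t₀ such that for all t ≥ t₁ one has f''(t)·f'(t) < 0 and f'''(t)·f''(t) < 0. -/
open Set Filter Topology

lemma aux_mono {g g' : ℝ → ℝ} {T : ℝ} (hg : ∀ t ≥ T, HasDerivAt g (g' t) t)
    (h : ∀ t ≥ T, 0 ≤ g' t) : MonotoneOn g (Ici T) := by
  refine monotoneOn_of_hasDerivWithinAt_nonneg (f' := g') (convex_Ici T)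
    (fun t ht => (hg t ht).continuousAt.continuousWithinAt) ?_ ?_
  · intro t ht
    exact (hg t (interior_subset ht)).hasDerivWithinAt
  · intro t ht
    exact h t (interior_subset ht)

lemma aux_strict {g g' : ℝ → ℝ} {T : ℝ} (hg : ∀ t ≥ T, HasDerivAt g (g' t) t)
    (h : ∀ t ≥ T, 0 < g' t) : StrictMonoOn g (Ici T) := by
  refine strictMonoOn_of_hasDerivWithinAt_pos (f' := g') (convex_Ici T)
    (fun t ht => (hg t ht).continuousAt.continuousWithinAt) ?_ ?_
  · intro t ht
    exact (hg t (interior_subset ht)).hasDerivWithinAt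
  · intro t ht
    exact h t (interior_subset ht)

lemma aux_neg {g g' : ℝ → ℝ} {T : ℝ} (hg : ∀ t ≥ T, HasDerivAt g (g' t) t)
    (h : ∀ t ≥ T, 0 < g' t) (hl : Tendsto g atTop (𝓝 0)) : ∀ t ≥ T, g t < 0 := by
  intro t ht
  have hm := aux_strict hg h
  have h1 : g t < g (t + 1) := hm ht (by simp only [mem_Ici]; linarith) (by linarith)
  have h2 : g (t + 1) ≤ 0 := by
    refine ge_of_tendsto hl ?_
    filter_upwards [eventually_ge_atTop (t + 1)] with s hs
    exact hm.monotoneOn (by simp only [mem_Ici]; linarith) (by simp only [mem_Ici]; linarith) hs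
  linarith

/-- Derivative bounded below by a positive constant contradicts convergence. -/
lemma aux_lim {g g' : ℝ → ℝ} {T c : ℝ} (hc : 0 < c) (hg : ∀ t ≥ T, HasDerivAt g (g' t) t)
    (h : ∀ t ≥ T, c ≤ g' t) (hl : Tendsto g atTop (𝓝 0)) : False := by
  have hneg := aux_neg hg (fun t ht => lt_of_lt_of_le hc (h t ht)) hl
  have hm : MonotoneOn (fun t => g t - c * t) (Ici T) := by
    refine aux_mono (g' := fun t => g' t - c * 1) (fun t ht => ?_) (fun t ht => ?_)
    · exact (hg t ht).sub ((hasDerivAt_id t).const_mul c)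
    · have := h t ht
      linarith
  have hT := hneg T le_rfl
  have hd : 0 < -g T / c := div_pos (by linarith) hc
  have h1 := hm (a := T) (b := T + -g T / c) (by simp) (by simp only [mem_Ici]; linarith) (by linarith)
  have h2 := hneg (T + -g T / c) (by linarith)
  simp only at h1
  have h3 : c * (T + -g T / c) = c * T - g T := by field_simp; ring
  rw [h3] at h1
  linarith

lemma aux_E {f : ℝ → ℝ} {t₀ : ℝ} (hf : ∀ t ≥ t₀, ContinuousAt f t) :
    ∃ E : ℝ → ℝ, (∀ t, 0 < E t) ∧ ∀ t ≥ t₀, HasDerivAt E (f t * E t) t := by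
  have hc : Continuous (fun s => f (max t₀ s)) := by
    rw [continuous_iff_continuousAt]
    intro s
    exact ContinuousAt.comp (f := fun s => max t₀ s) (hf _ (le_max_left _ _))
      (by fun_prop)
  refine ⟨fun t => Real.exp (∫ s in t₀..t, f (max t₀ s)), fun t => Real.exp_pos _, fun t ht => ?_⟩
  have := (hc.integral_hasStrictDerivAt t₀ t).hasDerivAt.exp
  simp only [max_eq_right ht] at this
  rwa [mul_comm] at this

/-- The core sign argument. -/
lemma aux_pos {u v w E d : ℝ → ℝ} {T : ℝ} (hu : ∀ t ≥ T, HasDerivAt u (v t) t)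
    (hv : ∀ t ≥ T, HasDerivAt v (w t) t) (hE : ∀ t, 0 < E t)
    (hw : ∀ t ≥ T, HasDerivAt (fun t => w t * E t) (d t) t) (hvp : ∀ t ≥ T, 0 < v t)
    (hl : Tendsto u atTop (𝓝 0)) (hd : ∀ t ≥ T, 0 < d t) : ∀ t ≥ T, w t < 0 := by
  by_contra! hcon
  obtain ⟨a, ha, hwa⟩ := hcon
  have hm := (aux_strict hw hd).monotoneOn
  have hwp : ∀ t ≥ a, 0 ≤ w t := by
    intro t ht
    have h1 := hm (a := a) (b := t) ha (le_trans ha ht) ht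
    simp only at h1
    have h2 : 0 ≤ w t * E t := le_trans (mul_nonneg hwa (hE a).le) h1
    exact nonneg_of_mul_nonneg_left h2 (hE t)
  have hvm := aux_mono (fun t (ht : t ≥ a) => hv t (le_trans ha ht)) hwp
  refine aux_lim (hvp a ha) (fun t (ht : t ≥ a) => hu t (le_trans ha ht)) ?_ hl
  intro t ht
  exact hvm (by simp) ht ht

lemma aux_ex {u v w E d : ℝ → ℝ} {T : ℝ} (hu : ∀ t ≥ T, HasDerivAt u (v t) t)
    (hv : ∀ t ≥ T, HasDerivAt v (w t) t) (hE : ∀ t, 0 < E t)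
    (hw : ∀ t ≥ T, HasDerivAt (fun t => w t * E t) (d t) t) (hvp : ∀ t ≥ T, v t < 0)
    (hl : Tendsto u atTop (𝓝 0)) (hd : ∀ t ≥ T, 0 < d t) : ∃ a ≥ T, ∀ t ≥ a, 0 < w t := by
  have hm := (aux_strict hw hd).monotoneOn
  have : ∃ a ≥ T, 0 < w a := by
    by_contra! hcon
    have hvm := aux_mono (fun t (ht : t ≥ T) => (hv t ht).neg)
      (fun t ht => by have := hcon t ht; linarith)
    refine aux_lim (c := - v T) (by have := hvp T le_rfl; linarith)
      (fun t (ht : t ≥ T) => (hu t ht).neg) ?_ (by have := hl.neg; rw [neg_zero] at this; exact this)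
    intro t ht
    exact hvm (by simp) ht ht
  obtain ⟨a, ha, hwa⟩ := this
  refine ⟨a, ha, fun t ht => ?_⟩
  have h1 := hm (a := a) (b := t) ha (le_trans ha ht) ht
  simp only at h1
  have h2 : 0 < w t * E t := lt_of_lt_of_le (mul_pos hwa (hE a)) h1
  exact pos_of_mul_pos_left h2 (hE t).le

/-- Backward uniqueness. -/
lemma aux_uniq {f u v w : ℝ → ℝ} {β a b : ℝ} (hab : a ≤ b)
    (hf : ∀ t ≥ a, ContinuousAt f t)
    (hu : ∀ t ≥ a, HasDerivAt u (v t) t) (hv : ∀ t ≥ a, HasDerivAt v (w t) t)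
    (heq : ∀ t ≥ a, w t = β * u t ^ 2 - f t * v t)
    (hub : u b = 0) (hvb : v b = 0) : ∀ t ∈ Icc a b, u t = 0 := by
  obtain ⟨K, hK⟩ := (isCompact_Icc (a := a) (b := b)).exists_bound_of_continuousOn
    (f := f) (fun t ht => (hf t ht.1).continuousWithinAt)
  obtain ⟨M, hM⟩ := (isCompact_Icc (a := a) (b := b)).exists_bound_of_continuousOn
    (f := u) (fun t ht => (hu t ht.1).continuousAt.continuousWithinAt)
  simp only [Real.norm_eq_abs] at hK hM
  set C := 1 + 2 * K + |β| * M with hC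
  let g : ℝ → ℝ := fun t => (u t ^ 2 + v t ^ 2) * Real.exp (C * t)
  let g' : ℝ → ℝ := fun t => (2 * u t * v t + 2 * v t * w t) * Real.exp (C * t)
    + (u t ^ 2 + v t ^ 2) * (Real.exp (C * t) * C)
  have hg : ∀ t ≥ a, HasDerivAt g (g' t) t := by
    intro t ht
    have h1 := (((hu t ht).pow 2).add ((hv t ht).pow 2)).mul
      (((hasDerivAt_id t).const_mul C).exp)
    refine h1.congr_deriv ?_
    simp only [g', Pi.add_apply, Pi.pow_apply, id]
    push_cast
    ring
  have hmono : MonotoneOn g (Icc a b) := by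
    refine monotoneOn_of_hasDerivWithinAt_nonneg (f' := g') (convex_Icc a b)
      (fun t ht => (hg t ht.1).continuousAt.continuousWithinAt) ?_ ?_
    · intro t ht
      exact (hg t (interior_subset ht).1).hasDerivWithinAt
    · intro t ht
      have ht' := interior_subset ht
      have e : g' t = (2 * u t * v t + 2 * v t * w t + C * (u t ^ 2 + v t ^ 2))
          * Real.exp (C * t) := by simp only [g']; ring
      rw [e]
      refine mul_nonneg ?_ (Real.exp_pos _).le
      rw [heq t ht'.1]
      have k := abs_le.1 (hK t ht')
      have hk0 : 0 ≤ K := (abs_nonneg _).trans (hK t ht')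
      have m : |β * u t| ≤ |β| * M := by
        rw [abs_mul]
        exact mul_le_mul_of_nonneg_left (hM t ht') (abs_nonneg _)
      set N := |β| * M
      have m' := abs_le.1 m
      set q := β * u t
      have e2 : 2 * u t * v t + 2 * v t * (β * u t ^ 2 - f t * v t) + C * (u t ^ 2 + v t ^ 2)
        = (u t + v t) ^ 2 + 2 * K * u t ^ 2 + 2 * (K - f t) * v t ^ 2
          + (N * (u t ^ 2 + v t ^ 2) + 2 * q * (u t * v t)) := by
        simp only [hC, q]; ring
      rw [e2]
      have p1 : 0 ≤ 2 * K * u t ^ 2 := by positivity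
      have p2 : 0 ≤ 2 * (K - f t) * v t ^ 2 :=
        mul_nonneg (by linarith [k.2]) (sq_nonneg _)
      have p3 : 0 ≤ N * (u t ^ 2 + v t ^ 2) + 2 * q * (u t * v t) := by
        have a1 := mul_nonneg (by linarith [m'.1] : 0 ≤ N + q) (sq_nonneg (u t + v t))
        have a2 := mul_nonneg (by linarith [m'.2] : 0 ≤ N - q) (sq_nonneg (u t - v t))
        linarith
      have p4 := sq_nonneg (u t + v t)
      linarith
  intro t ht
  have h1 := hmono ht (right_mem_Icc.2 hab) ht.2
  simp only [g, hub, hvb] at h1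
  have h2 : u t ^ 2 + v t ^ 2 ≤ 0 := by
    by_contra! hh
    have := mul_pos hh (Real.exp_pos (C * t))
    norm_num at h1
    linarith
  nlinarith [sq_nonneg (u t), sq_nonneg (v t)]

/-- Lemma 2: Let β < 0 and let f be a non-constant solution of
f''' + f·f'' − β·(f')² = 0 on [t₀, ∞) with f'(t) → 0 as t → ∞.
Then there exists t₁ ≥ t₀ such that f''(t)·f'(t) < 0 and f'''(t)·f''(t) < 0
for all t ≥ t₁. -/
theorem stmt_1 (β : ℝ) (hβ : β < 0) (t₀ : ℝ)
    (f f' f'' f''' : ℝ → ℝ)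
    (hf1 : ∀ t ∈ Set.Ici t₀, HasDerivAt f (f' t) t)
    (hf2 : ∀ t ∈ Set.Ici t₀, HasDerivAt f' (f'' t) t)
    (hf3 : ∀ t ∈ Set.Ici t₀, HasDerivAt f'' (f''' t) t)
    (heq : ∀ t ∈ Set.Ici t₀, f''' t + f t * f'' t - β * (f' t) ^ 2 = 0)
    (hnc : ¬ ∃ c : ℝ, ∀ t ∈ Set.Ici t₀, f t = c)
    (hlim : Filter.Tendsto f' Filter.atTop (nhds 0)) :
    ∃ t₁ ≥ t₀, ∀ t ≥ t₁, f'' t * f' t < 0 ∧ f''' t * f'' t < 0 := by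
  have hfc : ∀ t ≥ t₀, ContinuousAt f t := fun t ht => (hf1 t ht).continuousAt
  obtain ⟨E, hE, hE'⟩ := aux_E hfc
  have heq' : ∀ t ≥ t₀, f''' t = β * f' t ^ 2 - f t * f'' t := fun t ht => by
    have := heq t ht
    linarith
  have hG : ∀ t ≥ t₀, HasDerivAt (fun t => -(f'' t * E t)) (-β * f' t ^ 2 * E t) t := by
    intro t ht
    refine ((hf3 t ht).mul (hE' t ht)).neg.congr_deriv ?_
    rw [heq' t ht]; ring
  have hGm := aux_mono hG (fun t ht => mul_nonneg (mul_nonneg (by linarith) (sq_nonneg _)) (hE t).le)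
  have hW : ∀ t ≥ t₀, HasDerivAt (fun t => (β * f' t ^ 2 - f t * f'' t) * E t)
      ((2 * β - 1) * (f'' t * f' t) * E t) t := by
    intro t ht
    refine (((((hf2 t ht).pow 2).const_mul β).sub ((hf1 t ht).mul (hf3 t ht))).mul
      (hE' t ht)).congr_deriv ?_
    simp only [Pi.sub_apply, Pi.mul_apply, Pi.pow_apply]
    rw [heq' t ht]
    push_cast
    ring
  have hf3w : ∀ t ≥ t₀, HasDerivAt f'' (β * f' t ^ 2 - f t * f'' t) t := fun t ht => by
    rw [← heq' t ht]
    exact hf3 t ht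
  have key : (∀ t ≥ t₀, 0 < f'' t) ∨ ∃ T ≥ t₀, ∀ t ≥ T, f'' t < 0 := by
    by_cases hn : ∃ T ≥ t₀, f'' T < 0
    · right
      obtain ⟨T, hT, hT'⟩ := hn
      refine ⟨T, hT, fun t ht => ?_⟩
      have h1 := hGm (a := T) (b := t) hT (le_trans hT ht) ht
      simp only at h1
      have h2 := mul_neg_of_neg_of_pos hT' (hE T)
      by_contra! h3
      have h4 := mul_nonneg h3 (hE t).le
      linarith
    · left
      push Not at hn
      intro T hT
      refine lt_of_le_of_ne (hn T hT) (fun h0 => hnc ?_)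
      have hz : ∀ t ≥ T, f'' t = 0 := by
        intro t ht
        have h1 := hGm (a := T) (b := t) hT (le_trans hT ht) ht
        simp only [← h0] at h1
        have h4 := hn t (le_trans hT ht)
        have h5 : f'' t * E t ≤ 0 := by linarith
        have h6 := nonpos_of_mul_nonpos_left h5 (hE t)
        linarith
      have hu : ∀ t ≥ T, f' t = 0 := by
        intro t ht
        have m1 := aux_mono (fun s (hs : s ≥ T) => hf2 s (le_trans hT hs)) (fun s hs => (hz s hs).ge)
        have m2 := aux_mono (fun s (hs : s ≥ T) => (hf2 s (le_trans hT hs)).neg)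
          (fun s hs => by simp [hz s hs])
        have hc : ∀ s ≥ t, f' s = f' t := by
          intro s hs
          have a1 := m1 (a := t) (b := s) ht (le_trans ht hs) hs
          have a2 := m2 (a := t) (b := s) ht (le_trans ht hs) hs
          simp only [Pi.neg_apply] at a2
          linarith
        refine tendsto_nhds_unique ?_ hlim
        refine Tendsto.congr' ?_ (tendsto_const_nhds (x := f' t))
        filter_upwards [eventually_ge_atTop t] with s hs
        exact (hc s hs).symm
      have hall : ∀ t ≥ t₀, f' t = 0 := by
        intro t ht
        rcases le_total T t with h | h
        · exact hu t h
        · exact aux_uniq hT hfc hf2 hf3 heq' (hu T le_rfl) h0.symm t ⟨ht, h⟩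
      have m1 := aux_mono hf1 (fun s hs => (hall s hs).ge)
      have m2 := aux_mono (fun s (hs : s ≥ t₀) => (hf1 s hs).neg) (fun s hs => by simp [hall s hs])
      refine ⟨f t₀, fun t ht => ?_⟩
      have a1 := m1 (a := t₀) (b := t) (by simp) ht ht
      have a2 := m2 (a := t₀) (b := t) (by simp) ht ht
      simp only [Pi.neg_apply] at a2
      linarith
  have hd : ∀ t, f'' t * f' t < 0 → 0 < (2 * β - 1) * (f'' t * f' t) * E t := fun t h =>
    mul_pos (mul_pos_of_neg_of_neg (by linarith) h) (hE t)
  rcases key with hp | ⟨T, hT, hp⟩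
  · have hn := aux_neg hf2 hp hlim
    have hs : ∀ t ≥ t₀, f'' t * f' t < 0 := fun t ht =>
      mul_neg_of_pos_of_neg (hp t ht) (hn t ht)
    have := aux_pos hf2 hf3w hE hW hp hlim (fun t ht => hd t (hs t ht))
    exact ⟨t₀, le_rfl, fun t ht => ⟨hs t ht, by
      rw [heq' t ht]
      exact mul_neg_of_neg_of_pos (this t ht) (hp t ht)⟩⟩
  · have hf2' : ∀ t ≥ T, HasDerivAt f' (f'' t) t := fun t ht => hf2 t (le_trans hT ht)
    have hf3' : ∀ t ≥ T, HasDerivAt f'' (β * f' t ^ 2 - f t * f'' t) t := fun t ht => hf3w t (le_trans hT ht)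
    have hn := aux_neg (fun t ht => (hf2' t ht).neg) (fun t ht => by linarith [hp t ht])
      (by have := hlim.neg; rw [neg_zero] at this; exact this)
    have hs : ∀ t ≥ T, f'' t * f' t < 0 := fun t ht =>
      mul_neg_of_neg_of_pos (hp t ht) (by have := hn t ht; simp only [Pi.neg_apply] at this; linarith)
    obtain ⟨a, ha, hw⟩ := aux_ex hf2' hf3' hE (fun t ht => hW t (le_trans hT ht)) hp hlim
      (fun t ht => hd t (hs t ht))
    exact ⟨a, le_trans hT ha, fun t ht => ⟨hs t (le_trans ha ht),
      by
      rw [heq' t (le_trans hT (le_trans ha ht))]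
      exact mul_neg_of_pos_of_neg (hw t ht) (hp t (le_trans ha ht))⟩⟩
end

section
/- Let β < 0 and let f be a non-constant unbounded solution of equation (1) on an interval [t₀, ∞) satisfying condition (2). Then there exists a constant c > 0 such that |f(t)| / t^{1/(1−β)} → c as t → ∞ (i.e. |f(t)| is asymptotically equivalent to c·t^{1/(1−β)} at infinity). -/
open Filter Set

lemma aux_anti {T : ℝ} {y y' : ℝ → ℝ} (hd : ∀ t, T ≤ t → HasDerivAt y (y' t) t)
    (hn : ∀ t, T ≤ t → y' t ≤ 0) {a b : ℝ} (ha : T ≤ a) (hab : a ≤ b) : y b ≤ y a := by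
  have h : AntitoneOn y (Ici T) := by
    apply antitoneOn_of_deriv_nonpos (convex_Ici T)
    · exact fun t ht => (hd t ht).continuousAt.continuousWithinAt
    · intro t ht
      rw [interior_Ici] at ht
      exact (hd t (le_of_lt ht)).differentiableAt.differentiableWithinAt
    · intro t ht
      rw [interior_Ici] at ht
      rw [(hd t (le_of_lt ht)).deriv]
      exact hn t (le_of_lt ht)
  exact h ha (le_trans ha hab) hab

lemma aux_mono_s2 {T : ℝ} {y y' : ℝ → ℝ} (hd : ∀ t, T ≤ t → HasDerivAt y (y' t) t)
    (hn : ∀ t, T ≤ t → 0 ≤ y' t) {a b : ℝ} (ha : T ≤ a) (hab : a ≤ b) : y a ≤ y b := by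
  have := aux_anti (T := T) (y := fun t => - y t) (y' := fun t => - y' t)
    (fun t ht => (hd t ht).neg) (fun t ht => by simpa using hn t ht) ha hab
  simpa using this

lemma aux_neg_s2 {T c : ℝ} (hc : c < 0) {y y' : ℝ → ℝ} (hd : ∀ t, T ≤ t → HasDerivAt y (y' t) t)
    (hn : ∀ t, T ≤ t → y' t ≤ c) : ∃ t, T ≤ t ∧ y t < 0 := by
  have h := fun t (ht : T ≤ t) => aux_anti (T := T) (y := fun t => y t - c * t) (y' := fun t => y' t - c)
    (fun t ht => ((hd t ht).sub ((hasDerivAt_id t).const_mul c)).congr_deriv (by simp))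
    (fun t ht => by linarith [hn t ht]) le_rfl ht
  refine ⟨T + (|y T| + 1) / (-c), ?_, ?_⟩
  · have : 0 ≤ (|y T| + 1) / (-c) := by
      apply div_nonneg <;> [positivity; linarith]
    linarith
  · have h0 : 0 ≤ (|y T| + 1) / (-c) := by
      apply div_nonneg <;> [positivity; linarith]
    have := h (T + (|y T| + 1) / (-c)) (by linarith)
    have e : c * ((|y T| + 1) / (-c)) = -(|y T| + 1) := by
      rw [div_neg, mul_neg, mul_div_cancel₀ _ hc.ne]
    simp only [mul_add, e] at this
    linarith [le_abs_self (y T)]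

lemma aux_prim {T : ℝ} {h : ℝ → ℝ} (hc : ContinuousOn h (Ici T)) :
    ∃ F : ℝ → ℝ, F T = 0 ∧ ∀ t, T ≤ t → HasDerivAt F (h t) t := by
  have hc' : Continuous (fun x => h (max x T)) :=
    hc.comp_continuous (by fun_prop) (fun x => mem_Ici.2 (le_max_right _ _))
  refine ⟨fun t => ∫ x in T..t, h (max x T), by simp, fun t ht => ?_⟩
  have := hc'.integral_hasStrictDerivAt T t
  simpa [max_eq_left ht] using this.hasDerivAt

lemma aux_shape {T : ℝ} {h h' h'' : ℝ → ℝ}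
    (h1 : ∀ t, T ≤ t → HasDerivAt h (h' t) t)
    (h2 : ∀ t, T ≤ t → HasDerivAt h' (h'' t) t)
    (hn : ∀ t, T ≤ t → h'' t ≤ 0)
    (hl : Tendsto h' atTop (nhds 0))
    (hu : ¬ ∃ M : ℝ, ∀ t, T ≤ t → |h t| ≤ M) :
    Tendsto h atTop atTop ∧ ∀ t, T ≤ t → 0 < h' t := by
  have hge : ∀ t, T ≤ t → 0 ≤ h' t := by
    intro t ht
    apply le_of_tendsto hl
    filter_upwards [eventually_ge_atTop t] with s hs
    exact aux_anti h2 hn ht hs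
  have hmono : ∀ a b, T ≤ a → a ≤ b → h a ≤ h b := fun a b ha hab => aux_mono_s2 h1 hge ha hab
  have htop : Tendsto h atTop atTop := by
    rw [tendsto_atTop]
    intro M
    by_contra hM
    apply hu
    refine ⟨|h T| + |M|, fun t ht => ?_⟩
    have hlow := hmono T t le_rfl ht
    have hup : h t < M := by
      by_contra hcon
      apply hM
      filter_upwards [eventually_ge_atTop t] with s hs
      linarith [hmono t s ht hs]
    rw [abs_le]
    constructor
    · linarith [neg_abs_le (h T), abs_nonneg M]
    · linarith [le_abs_self M, abs_nonneg (h T)]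
  refine ⟨htop, fun t ht => ?_⟩
  by_contra hcon
  push Not at hcon
  obtain ⟨s, hs, hs'⟩ := ((htop.eventually_gt_atTop (h t)).and (eventually_ge_atTop t)).exists
  have := aux_anti (T := t) (fun s hs => h1 s (ht.trans hs))
    (fun s hs => (aux_anti h2 hn ht hs).trans hcon) le_rfl hs'
  linarith

lemma aux_boundA {T γ : ℝ} (hγ : 0 < γ) {h h' h'' h''' : ℝ → ℝ}
    (h1 : ∀ t, T ≤ t → HasDerivAt h (h' t) t)
    (h2 : ∀ t, T ≤ t → HasDerivAt h' (h'' t) t)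
    (h3 : ∀ t, T ≤ t → HasDerivAt h'' (h''' t) t)
    (heq : ∀ t, T ≤ t → h''' t = h t * h'' t + γ * h' t ^ 2)
    (hn : ∀ t, T ≤ t → h'' t ≤ 0)
    (hl : Tendsto h' atTop (nhds 0))
    (htop : Tendsto h atTop atTop) (hpos : ∀ t, T ≤ t → 0 < h' t) :
    ∃ K > 0, ∃ S ≥ T, ∀ t, S ≤ t → -(h'' t * h t) ≤ K * h' t := by
  obtain ⟨S, hS⟩ := eventually_atTop.1 (((htop.eventually_ge_atTop 0).and
    (eventually_ge_atTop T)).and (hl.eventually_lt_const zero_lt_one))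
  have hTS : T ≤ S := (hS S le_rfl).1.2
  refine ⟨γ, hγ, S, hTS, ?_⟩
  have key : ∀ t, S ≤ t → 0 ≤ h t * h'' t + γ * h' t ^ 2 := by
    intro t1 ht1
    by_contra hcon
    push Not at hcon
    obtain ⟨F, hF0, hF⟩ := aux_prim (T := t1) (h := h)
      (fun t ht => (h1 t (hTS.trans (ht1.trans ht))).continuousAt.continuousWithinAt)
    have hFge : ∀ t, t1 ≤ t → 0 ≤ F t := fun t ht => by
      rw [← hF0]; exact aux_mono_s2 hF (fun s hs => (hS s (ht1.trans hs)).1.1) le_rfl ht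
    have hw : ∀ t, t1 ≤ t → h''' t ≤ h t1 * h'' t1 + γ * h' t1 ^ 2 := by
      intro t ht
      have := aux_anti (T := t1) (y := fun t => (h t * h'' t + γ * h' t ^ 2) * Real.exp (-F t))
        (y' := fun t => (1 + 2 * γ) * h' t * h'' t * Real.exp (-F t)) (fun t ht => by
          have hT : T ≤ t := hTS.trans (ht1.trans ht)
          have := (((h1 t hT).mul (h3 t hT)).add (((h2 t hT).pow 2).const_mul γ)).mul
            ((hF t ht).neg.exp)
          refine this.congr_deriv ?_
          simp [heq t hT]
          ring) (fun t ht => by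
          have hT : T ≤ t := hTS.trans (ht1.trans ht)
          have := mul_nonneg (mul_nonneg (mul_nonneg (by linarith : 0 ≤ 1 + 2 * γ) (hpos t hT).le)
            (neg_nonneg.2 (hn t hT))) (Real.exp_pos (-F t)).le
          linarith) le_rfl ht
      simp only [hF0, neg_zero, Real.exp_zero, mul_one] at this
      rw [heq t (hTS.trans (ht1.trans ht))]
      have e1 : Real.exp (-F t) ≤ 1 := Real.exp_le_one_iff.2 (by linarith [hFge t ht])
      have e0 := Real.exp_pos (-F t)
      by_contra hc
      push Not at hc
      nlinarith
    obtain ⟨t2, ht2, hneg⟩ := aux_neg_s2 hcon (fun t ht => h3 t (hTS.trans (ht1.trans ht))) hw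
    obtain ⟨t3, ht3, hneg3⟩ := aux_neg_s2 hneg
      (fun t (ht : t2 ≤ t) => h2 t (hTS.trans (ht1.trans (ht2.trans ht))))
      (fun t ht => aux_anti (fun t ht => h3 t (hTS.trans (ht1.trans ht)))
        (fun t ht => (hw t ht).trans hcon.le) ht2 ht)
    linarith [hpos t3 (hTS.trans (ht1.trans (ht2.trans ht3)))]
  intro t ht
  have k := key t ht
  have hp := hpos t (hTS.trans ht)
  have hl1 := (hS t ht).2
  have : γ * h' t ^ 2 ≤ γ * h' t := by
    apply mul_le_mul_of_nonneg_left _ hγ.le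
    nlinarith
  linarith

lemma aux_boundB {T γ : ℝ} (hγ : 0 < γ) {h h' h'' h''' : ℝ → ℝ}
    (h1 : ∀ t, T ≤ t → HasDerivAt h (h' t) t)
    (h2 : ∀ t, T ≤ t → HasDerivAt h' (h'' t) t)
    (h3 : ∀ t, T ≤ t → HasDerivAt h'' (h''' t) t)
    (heq : ∀ t, T ≤ t → h''' t = -(h t * h'' t + γ * h' t ^ 2))
    (hl : Tendsto h' atTop (nhds 0))
    (htop : Tendsto h atTop atTop) (hpos : ∀ t, T ≤ t → 0 < h' t) :
    ∃ K > 0, ∃ S ≥ T, ∀ t, S ≤ t → -(h'' t * h t) ≤ K * h' t := by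
  obtain ⟨S, hS⟩ := eventually_atTop.1 (((htop.eventually_ge_atTop (2 + 4 * γ)).and
    (eventually_ge_atTop T)).and (hl.eventually_lt_const zero_lt_one))
  have hTS : T ≤ S := (hS S le_rfl).1.2
  obtain ⟨F, hF0, hF⟩ := aux_prim (T := S) (h := h)
      (fun t ht => (h1 t (hTS.trans ht)).continuousAt.continuousWithinAt)
  have hh : ∀ t, S ≤ t → 2 + 4 * γ ≤ h t := fun t ht => (hS t ht).1.1
  have hh' : ∀ t, S ≤ t → h' t < 1 := fun t ht => (hS t ht).2
  have hp : ∀ t, S ≤ t → 0 < h' t := fun t ht => hpos t (hTS.trans ht)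
  have hFge : ∀ t, S ≤ t → 0 ≤ F t := fun t ht => by
      rw [← hF0]; exact aux_mono_s2 hF (fun s hs => by linarith [hh s hs]) le_rfl ht
  have hF2 : ∀ t, S ≤ t → HasDerivAt (fun t => Real.exp (F t / 2)) (Real.exp (F t / 2) * (h t / 2)) t :=
    fun t ht => ((hF t ht).div_const 2).exp
  obtain ⟨t1, ht1, hq1⟩ : ∃ t1, S ≤ t1 ∧ 0 ≤ h'' t1 + h t1 * h' t1 / 2 := by
    by_contra hcon
    push Not at hcon
    obtain ⟨s, hs, hs'⟩ := ((htop.eventually_gt_atTop (h S + h' S)).and (eventually_ge_atTop S)).exists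
    have := aux_anti (T := S) (y := fun t => h t + h' t) (y' := fun t => h' t + h'' t)
      (fun t ht => (h1 t (hTS.trans ht)).add (h2 t (hTS.trans ht)))
      (fun t ht => by nlinarith [hcon t ht, hh t ht, hp t ht]) le_rfl hs'
    linarith [hp s hs']
  have hq : ∀ t, t1 ≤ t → 0 ≤ h'' t + h t * h' t / 2 := by
    intro t ht
    have := aux_mono_s2 (T := S) (y := fun t => (h'' t + h t * h' t / 2) * Real.exp (F t / 2))
      (y' := fun t => Real.exp (F t / 2) * (h' t * (h t ^ 2 / 4 + (1 / 2 - γ) * h' t)))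
      (fun t ht => by
        have hT : T ≤ t := hTS.trans ht
        refine (((h3 t hT).add (((h1 t hT).mul (h2 t hT)).div_const 2)).mul (hF2 t ht)).congr_deriv ?_
        simp [heq t hT]
        ring)
      (fun t ht => by
        have a := hh t ht
        have b := hh' t ht
        have c := hp t ht
        have : 0 ≤ h t ^ 2 / 4 + (1 / 2 - γ) * h' t := by nlinarith
        positivity) ht1 ht
    have l : 0 ≤ (h'' t1 + h t1 * h' t1 / 2) * Real.exp (F t1 / 2) := by positivity
    exact nonneg_of_mul_nonneg_left (l.trans this) (Real.exp_pos _)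
  have hc : ∀ t, t1 ≤ t → h' t1 * Real.exp (F t1 / 2) ≤ h' t * Real.exp (F t / 2) := by
    intro t ht
    exact aux_mono_s2 (T := t1) (y := fun t => h' t * Real.exp (F t / 2))
      (y' := fun t => Real.exp (F t / 2) * (h'' t + h t * h' t / 2))
      (fun t ht => by
        refine ((h2 t (hTS.trans (ht1.trans ht))).mul (hF2 t (ht1.trans ht))).congr_deriv ?_
        ring)
      (fun t ht => mul_nonneg (Real.exp_pos _).le (hq t ht)) le_rfl ht
  have hcpos : 0 < h' t1 * Real.exp (F t1 / 2) := mul_pos (hp t1 ht1) (Real.exp_pos _)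
  set K : ℝ := 2 + 2 * γ with hK
  set P : ℝ → ℝ := fun t => (h t * h'' t + K * h' t) * Real.exp (F t) with hP
  set P' : ℝ → ℝ := fun t => (h' t * (K * h t + h'' t - γ * h t * h' t) + K * h'' t) * Real.exp (F t) with hP'
  have hPd : ∀ t, t1 ≤ t → HasDerivAt P (P' t) t := by
    intro t ht
    have hT : T ≤ t := hTS.trans (ht1.trans ht)
    refine ((((h1 t hT).mul (h3 t hT)).add ((h2 t hT).const_mul K)).mul (hF t (ht1.trans ht)).exp).congr_deriv ?_
    simp [heq t hT, hP']
    ring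
  have hP'ge : ∀ t, t1 ≤ t → h' t1 * Real.exp (F t1 / 2) ≤ P' t := by
    intro t ht
    have hSt := ht1.trans ht
    have a := hh t hSt
    have b := hh' t hSt
    have c := hp t hSt
    have q := hq t ht
    refine (hc t ht).trans ?_
    have e1 : Real.exp (F t / 2) ≤ Real.exp (F t) := Real.exp_le_exp.2 (by linarith [hFge t hSt])
    have e2 : h' t ≤ h' t * (K * h t + h'' t - γ * h t * h' t) + K * h'' t := by
      have k1 : (h' t + K) * (-(h t * h' t / 2)) ≤ (h' t + K) * h'' t :=
        mul_le_mul_of_nonneg_left (by linarith) (by rw [hK]; linarith)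
      have k2 : 0 ≤ h t * h' t * (K / 2 - h' t / 2 - γ * h' t - 1 / 2) := by
        apply mul_nonneg (mul_nonneg (by linarith) c.le)
        rw [hK]; nlinarith
      have k3 : 0 ≤ h' t * (h t / 2 - 1) := mul_nonneg c.le (by linarith)
      linarith
    exact mul_le_mul e2 e1 (Real.exp_pos _).le (c.le.trans e2)
  obtain ⟨t2, ht2, hP2⟩ := aux_neg_s2 (T := t1) (y := fun t => - P t) (y' := fun t => - P' t)
    (neg_lt_zero.2 hcpos) (fun t ht => (hPd t ht).neg) (fun t ht => neg_le_neg (hP'ge t ht))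
  refine ⟨K, by rw [hK]; linarith, t2, hTS.trans (ht1.trans ht2), fun t ht => ?_⟩
  have := aux_mono_s2 hPd (fun t ht => hcpos.le.trans (hP'ge t ht)) ht2 ht
  have h0 : 0 ≤ P t := by linarith
  have := nonneg_of_mul_nonneg_left h0 (Real.exp_pos _)
  linarith

lemma aux_cesaro {T L : ℝ} {y y' : ℝ → ℝ} (hd : ∀ t, T ≤ t → HasDerivAt y (y' t) t)
    (hl : Tendsto y' atTop (nhds L)) : Tendsto (fun t => y t / t) atTop (nhds L) := by
  rw [Metric.tendsto_atTop]
  intro ε hε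
  obtain ⟨S, hS⟩ := eventually_atTop.1 ((Metric.tendsto_nhds.1 hl (ε/2) (by linarith)).and
    (eventually_ge_atTop T))
  have hb : ∀ t, S ≤ t → y t - y S ≤ (L + ε/2) * (t - S) ∧ (L - ε/2) * (t - S) ≤ y t - y S := by
    intro t ht
    have hy : ∀ t, S ≤ t → L - ε/2 < y' t ∧ y' t < L + ε/2 := fun t ht => by
      have := (hS t ht).1
      rw [Real.dist_eq, abs_lt] at this
      constructor <;> linarith
    have A := aux_anti (T := S) (y := fun t => y t - (L + ε/2) * t) (y' := fun t => y' t - (L + ε/2))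
      (fun t ht => ((hd t (hS t ht).2).sub ((hasDerivAt_id t).const_mul (L + ε/2))).congr_deriv (by simp))
      (fun t ht => by linarith [hy t ht]) le_rfl ht
    have B := aux_mono_s2 (T := S) (y := fun t => y t - (L - ε/2) * t) (y' := fun t => y' t - (L - ε/2))
      (fun t ht => ((hd t (hS t ht).2).sub ((hasDerivAt_id t).const_mul (L - ε/2))).congr_deriv (by simp))
      (fun t ht => by linarith [hy t ht]) le_rfl ht
    constructor <;> linarith
  obtain ⟨D, hD⟩ : ∃ D, D = |y S| + |(L + ε/2) * S| + |(L - ε/2) * S| := ⟨_, rfl⟩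
  have hD0 : 0 ≤ D := by rw [hD]; positivity
  refine ⟨max (max S 1) (2 * D / ε + 1), fun t ht => ?_⟩
  have ht1 : S ≤ t := (le_max_left _ _).trans ((le_max_left _ _).trans ht)
  have ht2 : 1 ≤ t := (le_max_right _ _).trans ((le_max_left _ _).trans ht)
  have ht3 : 2 * D / ε < t := by linarith [(le_max_right _ _).trans ht]
  rw [div_lt_iff₀ hε] at ht3
  obtain ⟨A, B⟩ := hb t ht1
  have tp : 0 < t := by linarith
  rw [Real.dist_eq, abs_lt]
  have e : y t / t - L = (y t - L * t) / t := by field_simp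
  rw [e, lt_div_iff₀ tp, div_lt_iff₀ tp]
  have x1 := abs_le.1 (le_refl |y S|)
  have x2 := abs_le.1 (le_refl |(L + ε/2) * S|)
  have x3 := abs_le.1 (le_refl |(L - ε/2) * S|)
  have z1 := abs_nonneg (y S)
  have z2 := abs_nonneg ((L + ε/2) * S)
  have z3 := abs_nonneg ((L - ε/2) * S)
  constructor <;> nlinarith

lemma aux_final {T γ K s : ℝ} (hγ : 0 < γ) (hK : 0 < K) (hs : s ^ 2 = 1) {h h' h'' h''' : ℝ → ℝ}
    (h1 : ∀ t, T ≤ t → HasDerivAt h (h' t) t)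
    (h2 : ∀ t, T ≤ t → HasDerivAt h' (h'' t) t)
    (h3 : ∀ t, T ≤ t → HasDerivAt h'' (h''' t) t)
    (heq : ∀ t, T ≤ t → h''' t = -(s * (h t * h'' t + γ * h' t ^ 2)))
    (hn : ∀ t, T ≤ t → h'' t ≤ 0)
    (htop : Tendsto h atTop atTop) (hpos : ∀ t, T ≤ t → 0 < h' t)
    (hb : ∀ t, T ≤ t → -(h'' t * h t) ≤ K * h' t) :
    ∃ c > 0, Tendsto (fun t => |h t| / t ^ (1 / (1 + γ))) atTop (nhds c) := by
  obtain ⟨S, hS⟩ := eventually_atTop.1 ((htop.eventually_ge_atTop (1 + 2 * K)).and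
    (eventually_ge_atTop T))
  have hTS : ∀ t, S ≤ t → T ≤ t := fun t ht => (hS t ht).2
  have hh : ∀ t, S ≤ t → 1 + 2 * K ≤ h t := fun t ht => (hS t ht).1
  have hh0 : ∀ t, S ≤ t → 0 < h t := fun t ht => by linarith [hh t ht]
  have hs' : |s| = 1 := by
    have : |s| ^ 2 = 1 := by rw [sq_abs, hs]
    nlinarith [abs_nonneg s]
  have habs : ∀ t, S ≤ t → |s * h'' t| ≤ K * h' t / h t := fun t ht => by
    rw [abs_mul, hs', one_mul, abs_of_nonpos (hn t (hTS t ht)), le_div_iff₀ (hh0 t ht)]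
    linarith [hb t (hTS t ht)]
  have hKh : ∀ t, S ≤ t → K * h' t / h t ≤ h t * h' t / 2 := fun t ht => by
    rw [div_le_iff₀ (hh0 t ht)]
    have := hh t ht
    have : K ≤ h t * h t / 2 := by nlinarith
    nlinarith [hpos t (hTS t ht)]
  set m : ℝ → ℝ := fun t => h t * h' t + s * h'' t with hm
  have hmge : ∀ t, S ≤ t → h t * h' t / 2 ≤ m t := fun t ht => by
    have := (abs_le.1 ((habs t ht).trans (hKh t ht))).1
    simp only [hm]; linarith
  have hhh : ∀ t, S ≤ t → 0 < h t * h' t := fun t ht => mul_pos (hh0 t ht) (hpos t (hTS t ht))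
  have hmpos : ∀ t, S ≤ t → 0 < m t := fun t ht => by linarith [hmge t ht, hhh t ht]
  set Λ : ℝ → ℝ := fun t => (γ - 1) * Real.log (h t) + Real.log (m t) with hΛ
  set Λ' : ℝ → ℝ := fun t => (γ - 1) * h' t * (s * h'' t) / (h t * m t) with hΛ'
  have hΛd : ∀ t, S ≤ t → HasDerivAt Λ (Λ' t) t := by
    intro t ht
    have hT := hTS t ht
    have a := hh0 t ht
    have b := hmpos t ht
    refine ((((h1 t hT).log a.ne').const_mul (γ - 1)).add
      ((((h1 t hT).mul (h2 t hT)).add ((h3 t hT).const_mul s)).log b.ne')).congr_deriv ?_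
    have : s * h''' t = -(h t * h'' t + γ * h' t ^ 2) := by
      rw [heq t hT]; linear_combination -(h t * h'' t + γ * h' t ^ 2) * hs
    rw [this]
    change (γ - 1) * (h' t / h t) + _ / (m t) = _
    simp only [hΛ']
    have hmt : s * h'' t = m t - h t * h' t := by simp [hm]
    rw [hmt]
    field_simp
    ring
  obtain ⟨C, hC⟩ : ∃ C, C = |γ - 1| * (2 * K) := ⟨_, rfl⟩
  have hC0 : 0 ≤ C := by rw [hC]; positivity
  have hΛb : ∀ t, S ≤ t → |Λ' t| ≤ C * h' t / h t ^ 3 := by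
    intro t ht
    have a := hh0 t ht
    have b := hmpos t ht
    have c := hpos t (hTS t ht)
    simp only [hΛ']
    rw [abs_div, abs_mul, abs_mul, abs_of_pos c, abs_of_pos (mul_pos a b), div_le_div_iff₀ (mul_pos a b) (by positivity)]
    calc |γ - 1| * h' t * |s * h'' t| * h t ^ 3 ≤ |γ - 1| * h' t * (K * h' t / h t) * h t ^ 3 := by
          gcongr; exact habs t ht
      _ = C * h' t * (h t * (h t * h' t / 2)) := by rw [hC]; field_simp
      _ ≤ C * h' t * (h t * m t) := by gcongr; exact hmge t ht
  set E : ℝ → ℝ := fun t => C / 2 * ((h t) ^ 2)⁻¹ with hE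
  have hE0 : ∀ t, 0 ≤ E t := fun t => by simp only [hE]; positivity
  have hEd : ∀ t, S ≤ t → HasDerivAt E (-(C * h' t / h t ^ 3)) t := by
    intro t ht
    have a := hh0 t ht
    refine ((((h1 t (hTS t ht)).pow 2).inv (pow_pos a 2).ne').const_mul (C/2)).congr_deriv ?_
    simp
    field_simp
  have hsq : Tendsto (fun t => ((h t) ^ 2)⁻¹) atTop (nhds 0) :=
    tendsto_inv_atTop_zero.comp ((tendsto_pow_atTop two_ne_zero).comp htop)
  have hElim : Tendsto E atTop (nhds 0) := by
    simpa using hsq.const_mul (C / 2)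
  have hanti : ∀ a b, S ≤ a → a ≤ b → Λ b + E b ≤ Λ a + E a := fun a b ha hab =>
    aux_anti (T := S) (y := fun t => Λ t + E t) (y' := fun t => Λ' t + -(C * h' t / h t ^ 3))
      (fun t ht => (hΛd t ht).add (hEd t ht))
      (fun t ht => by linarith [(abs_le.1 (hΛb t ht)).2]) ha hab
  have hmono : ∀ a b, S ≤ a → a ≤ b → Λ a - E a ≤ Λ b - E b := fun a b ha hab =>
    aux_mono_s2 (T := S) (y := fun t => Λ t - E t) (y' := fun t => Λ' t - -(C * h' t / h t ^ 3))
      (fun t ht => (hΛd t ht).sub (hEd t ht))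
      (fun t ht => by linarith [(abs_le.1 (hΛb t ht)).1]) ha hab
  obtain ⟨l, hl⟩ : ∃ l, Tendsto Λ atTop (nhds l) := by
    have hant : Antitone (fun t => Λ (max t S) + E (max t S)) := fun a b hab =>
      hanti _ _ (le_max_right _ _) (max_le_max_right S hab)
    have hbdd : BddBelow (range (fun t => Λ (max t S) + E (max t S))) := by
      refine ⟨Λ S - E S, ?_⟩
      rintro _ ⟨t, rfl⟩
      have := hmono S (max t S) le_rfl (le_max_right _ _)
      have := hE0 (max t S)
      simp only
      linarith
    have := tendsto_atTop_ciInf hant hbdd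
    refine ⟨_, (this.sub hElim).congr' ?_⟩
    filter_upwards [eventually_ge_atTop S] with t ht
    simp [max_eq_left ht]
  have hratio : Tendsto (fun t => m t / (h t * h' t)) atTop (nhds 1) := by
    rw [tendsto_iff_norm_sub_tendsto_zero]
    refine squeeze_zero' (Eventually.of_forall fun t => norm_nonneg _) ?_
      (by simpa using hsq.const_mul K : Tendsto (fun t => K * ((h t) ^ 2)⁻¹) atTop (nhds 0))
    filter_upwards [eventually_ge_atTop S] with t ht
    have a := hh0 t ht
    have c := hpos t (hTS t ht)
    have : m t / (h t * h' t) - 1 = s * h'' t / (h t * h' t) := by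
      simp only [hm]; field_simp; ring
    rw [this, Real.norm_eq_abs, abs_div, abs_of_pos (hhh t ht), div_le_iff₀ (hhh t ht)]
    refine (habs t ht).trans (le_of_eq ?_)
    field_simp
  have hφ : Tendsto (fun t => h t ^ γ * h' t) atTop (nhds (Real.exp l)) := by
    have := ((Real.continuous_exp.tendsto l).comp hl).div hratio one_ne_zero
    rw [div_one] at this
    refine this.congr' ?_
    filter_upwards [eventually_ge_atTop S] with t ht
    have a := hh0 t ht
    have b := hmpos t ht
    have c := hpos t (hTS t ht)
    simp only [Pi.div_apply, Function.comp, hΛ]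
    rw [Real.exp_add, Real.exp_log b, mul_comm (γ - 1), ← Real.rpow_def_of_pos a, Real.rpow_sub_one a.ne']
    field_simp
  have hG : ∀ t, S ≤ t → HasDerivAt (fun t => h t ^ (1 + γ)) ((1 + γ) * (h t ^ γ * h' t)) t := by
    intro t ht
    refine ((h1 t (hTS t ht)).rpow_const (p := 1 + γ) (Or.inl (hh0 t ht).ne')).congr_deriv ?_
    rw [add_sub_cancel_left]; ring
  have hces := aux_cesaro hG (hφ.const_mul (1 + γ))
  have hLpos : 0 < (1 + γ) * Real.exp l := by positivity
  refine ⟨((1 + γ) * Real.exp l) ^ (1 / (1 + γ)), by positivity, ?_⟩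
  refine (hces.rpow_const (p := 1 / (1 + γ)) (Or.inl hLpos.ne')).congr' ?_
  filter_upwards [eventually_ge_atTop S, eventually_gt_atTop 0] with t ht ht0
  have a := hh0 t ht
  rw [Real.div_rpow (by positivity) ht0.le, ← Real.rpow_mul a.le, mul_one_div_cancel (by positivity), Real.rpow_one, abs_of_pos a]


/-- Theorem 3: Let β < 0 and let f be a non-constant unbounded solution of
f''' + f·f'' − β·(f')² = 0 on [t₀, ∞) with f'(t) → 0 as t → ∞.
Then there exists c > 0 such that |f(t)| ∼ c·t^{1/(1−β)} as t → ∞. -/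
theorem stmt_2 (β : ℝ) (hβ : β < 0) (t₀ : ℝ)
    (f f' f'' f''' : ℝ → ℝ)
    (hf1 : ∀ t ∈ Set.Ici t₀, HasDerivAt f (f' t) t)
    (hf2 : ∀ t ∈ Set.Ici t₀, HasDerivAt f' (f'' t) t)
    (hf3 : ∀ t ∈ Set.Ici t₀, HasDerivAt f'' (f''' t) t)
    (heq : ∀ t ∈ Set.Ici t₀, f''' t + f t * f'' t - β * (f' t) ^ 2 = 0)
    (hnc : ¬ ∃ c : ℝ, ∀ t ∈ Set.Ici t₀, f t = c)
    (hunb : ¬ ∃ M : ℝ, ∀ t ∈ Set.Ici t₀, |f t| ≤ M)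
    (hlim : Filter.Tendsto f' Filter.atTop (nhds 0)) :
    ∃ c > 0, Filter.Tendsto (fun t => |f t| / t ^ (1 / (1 - β)))
      Filter.atTop (nhds c) := by


  have hs1 : ∀ t, t₀ ≤ t → HasDerivAt f (f' t) t := hf1
  have hs2 : ∀ t, t₀ ≤ t → HasDerivAt f' (f'' t) t := hf2
  have hs3 : ∀ t, t₀ ≤ t → HasDerivAt f'' (f''' t) t := hf3
  have hse : ∀ t, t₀ ≤ t → f''' t = -(f t * f'' t + (-β) * f' t ^ 2) := fun t ht => by
    linarith [heq t ht]
  have hγ : 0 < -β := by linarith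
  have hub : ∀ T, t₀ ≤ T → ¬ ∃ M : ℝ, ∀ t, T ≤ t → |f t| ≤ M := by
    rintro T hT ⟨M, hM⟩
    apply hunb
    obtain ⟨M', hM'⟩ := (isCompact_Icc (a := t₀) (b := T)).exists_bound_of_continuousOn (f := f)
      (fun t ht => (hs1 t ht.1).continuousAt.continuousWithinAt)
    refine ⟨max M M', fun t ht => ?_⟩
    rcases le_total T t with h | h
    · exact (hM t h).trans (le_max_left _ _)
    · exact (hM' t ⟨ht, h⟩).trans (le_max_right _ _)
  rw [show 1 - β = 1 + -β by ring]
  by_cases hex : ∃ T, t₀ ≤ T ∧ f'' T ≤ 0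
  · obtain ⟨T, hT, hfT⟩ := hex
    obtain ⟨F, hF0, hF⟩ := aux_prim (T := T) (h := f)
      (fun t ht => (hs1 t (hT.trans ht)).continuousAt.continuousWithinAt)
    have hn : ∀ t, T ≤ t → f'' t ≤ 0 := by
      intro t ht
      have := aux_anti (T := T) (y := fun t => f'' t * Real.exp (F t))
        (y' := fun t => (β * f' t ^ 2) * Real.exp (F t))
        (fun t ht => by
          refine ((hs3 t (hT.trans ht)).mul (hF t ht).exp).congr_deriv ?_
          rw [hse t (hT.trans ht)]; ring)
        (fun t ht => mul_nonpos_of_nonpos_of_nonneg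
          (mul_nonpos_of_nonpos_of_nonneg hβ.le (sq_nonneg _)) (Real.exp_pos _).le) le_rfl ht
      simp only [hF0, Real.exp_zero, mul_one] at this
      by_contra hc
      push Not at hc
      linarith [mul_pos hc (Real.exp_pos (F t))]
    obtain ⟨htop, hpos⟩ := aux_shape (fun t ht => hs1 t (hT.trans ht))
      (fun t ht => hs2 t (hT.trans ht)) hn hlim (hub T hT)
    obtain ⟨K, hK, S, hS, hb⟩ := aux_boundB hγ (fun t ht => hs1 t (hT.trans ht))
      (fun t ht => hs2 t (hT.trans ht)) (fun t ht => hs3 t (hT.trans ht))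
      (fun t ht => hse t (hT.trans ht)) hlim htop hpos
    have hTS : t₀ ≤ S := hT.trans hS
    exact aux_final (s := 1) hγ hK (by norm_num) (fun t ht => hs1 t (hTS.trans ht))
      (fun t ht => hs2 t (hTS.trans ht)) (fun t ht => hs3 t (hTS.trans ht))
      (fun t ht => by rw [hse t (hTS.trans ht)]; ring) (fun t ht => hn t (le_trans hS ht)) htop
      (fun t ht => hpos t (le_trans hS ht)) hb
  · push Not at hex
    have g1 : ∀ t, t₀ ≤ t → HasDerivAt (fun t => - f t) (- f' t) t := fun t ht => (hs1 t ht).neg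
    have g2 : ∀ t, t₀ ≤ t → HasDerivAt (fun t => - f' t) (- f'' t) t := fun t ht => (hs2 t ht).neg
    have g3 : ∀ t, t₀ ≤ t → HasDerivAt (fun t => - f'' t) (- f''' t) t := fun t ht => (hs3 t ht).neg
    have hn : ∀ t, t₀ ≤ t → - f'' t ≤ 0 := fun t ht => by linarith [hex t ht]
    have hlim' : Filter.Tendsto (fun t => - f' t) Filter.atTop (nhds 0) := by
      simpa using hlim.neg
    obtain ⟨htop, hpos⟩ := aux_shape g1 g2 hn hlim' (by simpa using hub t₀ le_rfl)
    obtain ⟨K, hK, S, hS, hb⟩ := aux_boundA hγ g1 g2 g3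
      (fun t ht => by rw [hse t ht]; ring) hn hlim' htop hpos
    have := aux_final (s := -1) hγ hK (by norm_num) (fun t ht => g1 t (le_trans hS ht))
      (fun t ht => g2 t (le_trans hS ht)) (fun t ht => g3 t (le_trans hS ht))
      (fun t ht => by rw [hse t (le_trans hS ht)]; ring) (fun t ht => hn t (le_trans hS ht)) htop
      (fun t ht => hpos t (le_trans hS ht)) hb
    simpa only [abs_neg] using this
end

section
/- Let β < 0 and let f be a non-constant solution of equation (1) on [t₀, ∞) satisfying condition (2). Then f''(t) → 0 as t → ∞. -/
open Set Filter Topology in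
theorem aux_mono_s3 (G G' : ℝ → ℝ) (a : ℝ) (h : ∀ t, a ≤ t → HasDerivAt G (G' t) t)
    (h0 : ∀ t, a ≤ t → 0 ≤ G' t) : ∀ s t, a ≤ s → s ≤ t → G s ≤ G t := by
  have : MonotoneOn G (Ici a) := by
    apply monotoneOn_of_deriv_nonneg (convex_Ici a)
    · exact fun t ht => (h t ht).continuousAt.continuousWithinAt
    · intro t ht
      rw [interior_Ici] at ht
      exact (h t (le_of_lt ht)).differentiableAt.differentiableWithinAt
    · intro t ht
      rw [interior_Ici] at ht
      rw [(h t (le_of_lt ht)).deriv]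
      exact h0 t (le_of_lt ht)
  intro s t hs hst
  exact this hs (hs.trans hst) hst

open Set Filter Topology in
theorem aux_barb (P g g' : ℝ → ℝ) (a C M : ℝ) (hC : 0 ≤ C) (hM : 0 < M)
    (hP : ∀ t, a ≤ t → HasDerivAt P (g t) t)
    (hg : ∀ t, a ≤ t → HasDerivAt g (g' t) t)
    (hg0 : ∀ t, a ≤ t → 0 ≤ g t)
    (hb : ∀ t, a ≤ t → g' t ≤ C * g t + M)
    (hl : Tendsto P atTop (𝓝 0)) : Tendsto g atTop (𝓝 0) := by
  have key := aux_mono_s3 (fun t => M * t - (g t - C * P t)) (fun t => M * 1 - (g' t - C * g t)) a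
    (fun t ht => ((hasDerivAt_id t).const_mul M).sub ((hg t ht).sub ((hP t ht).const_mul C)))
    (fun t ht => by have := hb t ht; linarith)
  rw [Metric.tendsto_atTop] at hl ⊢
  intro ε hε
  obtain ⟨d, hd, hdM⟩ : ∃ d : ℝ, 0 < d ∧ M * d = ε / 4 :=
    ⟨ε / 4 / M, by positivity, by field_simp⟩
  obtain ⟨η, hη, h1, h2⟩ : ∃ η : ℝ, 0 < η ∧ 2 * C * η ≤ ε / 4 ∧ 2 * η ≤ d * (ε / 4) := by
    refine ⟨min (ε / (8 * (C + 1))) (d * ε / 8), by positivity, ?_, ?_⟩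
    · have : min (ε / (8 * (C + 1))) (d * ε / 8) ≤ ε / (8 * (C + 1)) := min_le_left _ _
      calc _ ≤ 2 * (C + 1) * (ε / (8 * (C + 1))) := by gcongr; linarith
        _ = ε / 4 := by field_simp; norm_num
    · have : min (ε / (8 * (C + 1))) (d * ε / 8) ≤ d * ε / 8 := min_le_right _ _
      linarith
  obtain ⟨N, hN⟩ := hl η hη
  refine ⟨max a N + d, fun t ht => ?_⟩
  have ha := le_max_left a N
  have hn := le_max_right a N
  have hPb : ∀ s, N ≤ s → -η < P s ∧ P s < η := by
    intro s hs
    have := hN s hs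
    rw [Real.dist_eq, sub_zero] at this
    exact abs_lt.mp this
  obtain ⟨ξ, hξ, hξe⟩ := exists_hasDerivAt_eq_slope P g (show t - d < t by linarith)
    (fun s hs => (hP s (by linarith [hs.1])).continuousAt.continuousWithinAt)
    (fun s hs => hP s (by linarith [hs.1]))
  rw [show t - (t - d) = d by ring, eq_div_iff hd.ne'] at hξe
  have k := key ξ t (by linarith [hξ.1]) hξ.2.le
  have b1 := hPb t (by linarith)
  have b2 := hPb (t - d) (by linarith)
  have b3 := hPb ξ (by linarith [hξ.1])
  have hgξ : g ξ ≤ ε / 4 := by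
    by_contra hh
    push Not at hh
    have := mul_lt_mul_of_pos_right hh hd
    linarith
  have hMM : M * t - M * ξ ≤ ε / 4 := by
    rw [← hdM, ← mul_sub]
    exact mul_le_mul_of_nonneg_left (by linarith [hξ.1]) hM.le
  have c1 : C * P t - C * P ξ ≤ 2 * C * η := by nlinarith
  rw [Real.dist_eq, sub_zero, abs_of_nonneg (hg0 t (by linarith))]
  linarith

open Set Filter Topology in
theorem aux_prim_s3 (f : ℝ → ℝ) (a : ℝ) (h : ∀ t, a ≤ t → ContinuousAt f t) :
    ∃ F : ℝ → ℝ, ∀ t, a ≤ t → HasDerivAt F (f t) t := by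
  have hc : Continuous (fun t => f (max t a)) := by
    rw [continuous_iff_continuousAt]
    intro t
    exact ContinuousAt.comp (f := fun t => max t a) (g := f) (h _ (le_max_right _ _))
      (by fun_prop)
  refine ⟨fun t => ∫ s in a..t, f (max s a), fun t ht => ?_⟩
  have := hc.integral_hasStrictDerivAt a t
  simpa [max_eq_left ht] using this.hasDerivAt

/-- Let β < 0 and let f be a non-constant solution of
f''' + f·f'' − β·(f')² = 0 on [t₀, ∞) with f'(t) → 0 as t → ∞.
Then f''(t) → 0 as t → ∞. -/
theorem stmt_3 (β : ℝ) (hβ : β < 0) (t₀ : ℝ)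
    (f f' f'' f''' : ℝ → ℝ)
    (hf1 : ∀ t ∈ Set.Ici t₀, HasDerivAt f (f' t) t)
    (hf2 : ∀ t ∈ Set.Ici t₀, HasDerivAt f' (f'' t) t)
    (hf3 : ∀ t ∈ Set.Ici t₀, HasDerivAt f'' (f''' t) t)
    (heq : ∀ t ∈ Set.Ici t₀, f''' t + f t * f'' t - β * (f' t) ^ 2 = 0)
    (hnc : ¬ ∃ c : ℝ, ∀ t ∈ Set.Ici t₀, f t = c)
    (hlim : Filter.Tendsto f' Filter.atTop (nhds 0)) :
    Filter.Tendsto f'' Filter.atTop (nhds 0) := by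
  simp only [Set.mem_Ici] at hf1 hf2 hf3 heq
  obtain ⟨F, hF⟩ := aux_prim_s3 f t₀ (fun t ht => (hf1 t ht).continuousAt)
  by_cases hA : ∀ t, t₀ ≤ t → 0 < f'' t
  · have m1 := aux_mono_s3 f' f'' t₀ hf2 (fun t ht => (hA t ht).le)
    have hneg : ∀ t, t₀ ≤ t → f' t ≤ 0 := by
      intro t ht
      apply ge_of_tendsto hlim
      filter_upwards [Filter.eventually_ge_atTop t] with s hs
      exact m1 t s ht hs
    let W : ℝ → ℝ := fun t => -(f t * f'' t) + β * (f' t) ^ 2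
    have hW : ∀ t, t₀ ≤ t → f''' t = W t := fun t ht => by
      have := heq t ht
      simp only [W]; linarith
    have hWd : ∀ t, t₀ ≤ t → HasDerivAt W
        (-(f' t * f'' t + f t * f''' t) + β * (2 * f' t * f'' t)) t := by
      intro t ht
      have := (((hf1 t ht).mul (hf3 t ht)).neg).add (((hf2 t ht).pow 2).const_mul β)
      refine this.congr_deriv ?_
      simp
    have m2 := aux_mono_s3 (fun t => W t * Real.exp (F t)) _ t₀
      (fun t ht => (hWd t ht).mul (hF t ht).exp) (fun t ht => by
        have e : (-(f' t * f'' t + f t * f''' t) + β * (2 * f' t * f'' t)) * Real.exp (F t)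
          + W t * (Real.exp (F t) * f t) = ((-f' t) * f'' t + 2 * ((-β) * (-f' t) * f'' t))
            * Real.exp (F t) := by
          rw [hW t ht]; ring
        have h1 := hneg t ht
        have h2 := (hA t ht).le
        have a1 : 0 ≤ -f' t := by linarith
        have a2 : 0 ≤ -β := by linarith
        rw [e]
        positivity)
    have hWn : ∀ t, t₀ ≤ t → W t ≤ 0 := by
      intro T hT
      by_contra hh
      push Not at hh
      have hp : ∀ t, T ≤ t → 0 ≤ W t := by
        intro t ht
        have h1 := m2 T t hT ht
        have h2 : 0 < W T * Real.exp (F T) := by positivity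
        exact (pos_of_mul_pos_left (lt_of_lt_of_le h2 h1) (Real.exp_pos _).le).le
      have m3 := aux_mono_s3 f'' f''' T (fun t ht => hf3 t (hT.trans ht))
        (fun t ht => by rw [hW t (hT.trans ht)]; exact hp t ht)
      have m4 := aux_mono_s3 (fun t => f' t - f'' T * t) (fun t => f'' t - f'' T * 1) T
        (fun t ht => (hf2 t (hT.trans ht)).sub ((hasDerivAt_id t).const_mul _))
        (fun t ht => by have := m3 T t le_rfl ht; linarith)
      have hg := hA T hT
      have hpos : 0 ≤ -f' T / f'' T := div_nonneg (by linarith [hneg T hT]) hg.le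
      have h5 := m4 T (T + (-f' T / f'' T + 1)) le_rfl (by linarith)
      have h6 := hneg (T + (-f' T / f'' T + 1)) (by linarith)
      have h7 : f'' T * (T + (-f' T / f'' T + 1)) = f'' T * T - f' T + f'' T := by
        field_simp; ring
      rw [h7] at h5
      linarith
    exact aux_barb f' f'' f''' t₀ 0 1 le_rfl one_pos hf2 hf3 (fun t ht => (hA t ht).le)
      (fun t ht => by rw [hW t ht]; linarith [hWn t ht]) hlim
  · push Not at hA
    obtain ⟨t₁, ht₁, h1⟩ := hA
    have m1 := aux_mono_s3 (fun t => -(f'' t * Real.exp (F t))) _ t₀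
      (fun t ht => ((hf3 t ht).mul (hF t ht).exp).neg) (fun t ht => by
        have e : -(f''' t * Real.exp (F t) + f'' t * (Real.exp (F t) * f t))
          = ((-β) * (f' t) ^ 2) * Real.exp (F t) := by
          linear_combination (-Real.exp (F t)) * heq t ht
        have a2 : 0 ≤ -β := by linarith
        rw [e]
        positivity)
    have hn : ∀ t, t₁ ≤ t → f'' t ≤ 0 := by
      intro t ht
      have h2 := m1 t₁ t ht₁ ht
      have h3 : f'' t₁ * Real.exp (F t₁) ≤ 0 :=
        mul_nonpos_of_nonpos_of_nonneg h1 (Real.exp_pos _).le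
      by_contra hh
      push Not at hh
      have : 0 < f'' t * Real.exp (F t) := by positivity
      linarith
    have m2 := aux_mono_s3 (fun t => -f' t) (fun t => -f'' t) t₁
      (fun t ht => (hf2 t (ht₁.trans ht)).neg) (fun t ht => by have := hn t ht; linarith)
    have hpos : ∀ t, t₁ ≤ t → 0 ≤ f' t := by
      intro t ht
      apply le_of_tendsto hlim
      filter_upwards [Filter.eventually_ge_atTop t] with s hs
      have := m2 t s ht hs
      linarith
    have m3 := aux_mono_s3 f f' t₁ (fun t ht => hf1 t (ht₁.trans ht)) hpos
    have hB := aux_barb (fun t => -f' t) (fun t => -f'' t) (fun t => -f''' t) t₁ |f t₁|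
      ((-β) * (f' t₁) ^ 2 + 1) (abs_nonneg _)
      (by have a2 : 0 ≤ -β := by linarith
          positivity)
      (fun t ht => (hf2 t (ht₁.trans ht)).neg) (fun t ht => (hf3 t (ht₁.trans ht)).neg)
      (fun t ht => by have := hn t ht; linarith)
      (fun t ht => by
        have h2 := heq t (ht₁.trans ht)
        have h3 := m3 t₁ t le_rfl ht
        have h4 := neg_abs_le (f t₁)
        have h5 : 0 ≤ (f t + |f t₁|) * (-f'' t) :=
          mul_nonneg (by linarith) (by linarith [hn t ht])
        have h6 := m2 t₁ t le_rfl ht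
        have h7 : (f' t) ^ 2 ≤ (f' t₁) ^ 2 := pow_le_pow_left₀ (hpos t ht) (by linarith) 2
        have h8 : (-β) * (f' t) ^ 2 ≤ (-β) * (f' t₁) ^ 2 :=
          mul_le_mul_of_nonneg_left h7 (by linarith)
        linarith)
      (by simpa using hlim.neg)
    simpa using hB.neg
end

section
/- Let β be real and let f be a solution of equation (1) on an interval I such that f does not vanish on I. Define U = f'/f² and V = f''/f³ on I. Then on I one has U' = f·(V − 2U²) and V' = f·(−V + β·U² − 3·U·V). (Equivalently, after the change of independent variable s = ∫_τ^t f(ξ)dξ, the pair (u, v) = (U, V) satisfies the planar system u̇ = v − 2u², v̇ = −v + β·u² − 3·u·v.) -/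
/-- Blow-up coordinates: if f solves f''' + f·f'' − β·(f')² = 0 on an interval I
and f does not vanish on I, then U = f'/f² and V = f''/f³ satisfy
U' = f·(V − 2U²) and V' = f·(−V + β·U² − 3·U·V) on I. -/
theorem stmt_6 (β : ℝ) (I : Set ℝ) (hI : I.OrdConnected)
    (f f' f'' f''' : ℝ → ℝ)
    (hf1 : ∀ t ∈ I, HasDerivAt f (f' t) t)
    (hf2 : ∀ t ∈ I, HasDerivAt f' (f'' t) t)
    (hf3 : ∀ t ∈ I, HasDerivAt f'' (f''' t) t)
    (heq : ∀ t ∈ I, f''' t + f t * f'' t - β * (f' t) ^ 2 = 0)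
    (hf0 : ∀ t ∈ I, f t ≠ 0)
    (U V : ℝ → ℝ)
    (hU : ∀ t, U t = f' t / (f t) ^ 2)
    (hV : ∀ t, V t = f'' t / (f t) ^ 3) :
    ∀ t ∈ I,
      HasDerivAt U (f t * (V t - 2 * (U t) ^ 2)) t ∧
      HasDerivAt V (f t * (-(V t) + β * (U t) ^ 2 - 3 * U t * V t)) t := by
  intro t ht
  have h0 := hf0 t ht
  have e : f''' t = β * (f' t) ^ 2 - f t * f'' t := by linarith [heq t ht]
  have hUe : U = fun t => f' t / (f t) ^ 2 := funext hU
  have hVe : V = fun t => f'' t / (f t) ^ 3 := funext hV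
  constructor
  · have h := (hf2 t ht).fun_div ((hf1 t ht).fun_pow 2) (pow_ne_zero 2 h0)
    rw [← hUe] at h
    refine HasDerivAt.congr_deriv h ?_
    rw [hU, hV]
    field_simp
    push_cast
    ring
  · have h := (hf3 t ht).fun_div ((hf1 t ht).fun_pow 3) (pow_ne_zero 3 h0)
    rw [← hVe] at h
    refine HasDerivAt.congr_deriv h ?_
    rw [hU, hV, e]
    field_simp
    push_cast
    ring
end

section
/- Let β be real and let f be a solution of equation (1) on [t₁, ∞) such that f(t) > 0, f'(t) > 0, f''(t) < 0 and f'''(t) > 0 for all t ≥ t₁. Then the function φ = f'·f^{−β} satisfies φ'(t) = −f'''(t)·f(t)^{−β−1} < 0 for t > t₁; in particular φ is strictly decreasing on [t₁, ∞) and tends to a finite limit l₀ ∈ [0, ∞) as t → ∞. -/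
/-- If f solves f''' + f·f'' − β·(f')² = 0 on [t₁, ∞) with f > 0, f' > 0,
f'' < 0 and f''' > 0 on [t₁, ∞), then φ = f'·f^{−β} satisfies
φ'(t) = −f'''(t)·f(t)^{−β−1} < 0 for t > t₁, φ is strictly decreasing on
[t₁, ∞) and tends to a finite limit l₀ ∈ [0, ∞) at infinity. -/
theorem stmt_7 (β : ℝ) (t₁ : ℝ)
    (f f' f'' f''' : ℝ → ℝ)
    (hf1 : ∀ t ∈ Set.Ici t₁, HasDerivAt f (f' t) t)
    (hf2 : ∀ t ∈ Set.Ici t₁, HasDerivAt f' (f'' t) t)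
    (hf3 : ∀ t ∈ Set.Ici t₁, HasDerivAt f'' (f''' t) t)
    (heq : ∀ t ∈ Set.Ici t₁, f''' t + f t * f'' t - β * (f' t) ^ 2 = 0)
    (hpos : ∀ t ∈ Set.Ici t₁, 0 < f t ∧ 0 < f' t ∧ f'' t < 0 ∧ 0 < f''' t)
    (φ : ℝ → ℝ) (hφ : ∀ t, φ t = f' t * (f t) ^ (-β)) :
    (∀ t > t₁, HasDerivAt φ (-(f''' t) * (f t) ^ (-β - 1)) t ∧
        -(f''' t) * (f t) ^ (-β - 1) < 0) ∧
    StrictAntiOn φ (Set.Ici t₁) ∧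
    ∃ l₀ : ℝ, 0 ≤ l₀ ∧ Filter.Tendsto φ Filter.atTop (nhds l₀) := by
  have key : ∀ t ∈ Set.Ici t₁, HasDerivAt φ (-(f''' t) * (f t) ^ (-β - 1)) t ∧
      -(f''' t) * (f t) ^ (-β - 1) < 0 := by
    intro t ht
    obtain ⟨h0, h1, h2, h3⟩ := hpos t ht
    refine ⟨?_, ?_⟩
    · have hd := (hf2 t ht).mul ((hf1 t ht).rpow_const (p := -β) (Or.inl h0.ne'))
      have hfun : φ = f' * fun x => f x ^ (-β) := by
        funext x
        simp [hφ x]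
      rw [hfun]
      refine hd.congr_deriv ?_
      have hr : f t ^ (-β) = f t ^ (-β - 1) * f t := by
        rw [← Real.rpow_add_one h0.ne']
        congr 1
        ring
      rw [hr]
      linear_combination (f t ^ (-β - 1)) * heq t ht
    · have := mul_pos h3 (Real.rpow_pos_of_pos h0 (-β - 1))
      linarith
  have hanti : StrictAntiOn φ (Set.Ici t₁) := by
    apply strictAntiOn_of_deriv_neg (convex_Ici t₁)
    · intro t ht
      exact (key t ht).1.continuousAt.continuousWithinAt
    · intro t ht
      have ht2 : t ∈ Set.Ici t₁ := interior_subset ht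
      rw [(key t ht2).1.deriv]
      exact (key t ht2).2
  refine ⟨fun t ht => key t (le_of_lt ht), hanti, ?_⟩
  have hnn : ∀ t, 0 ≤ φ (max t t₁) := by
    intro t
    have h := hpos (max t t₁) (le_max_right t t₁)
    rw [hφ]
    exact mul_nonneg h.2.1.le (Real.rpow_nonneg h.1.le _)
  have hψ : Antitone fun t => φ (max t t₁) := by
    intro a b hab
    exact hanti.antitoneOn (le_max_right a t₁) (le_max_right b t₁) (max_le_max_right t₁ hab)
  refine ⟨⨅ t, φ (max t t₁), le_ciInf hnn, ?_⟩
  have hlim := tendsto_atTop_ciInf hψ ⟨0, by rintro _ ⟨t, rfl⟩; exact hnn t⟩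
  refine hlim.congr' ?_
  filter_upwards [Filter.eventually_ge_atTop t₁] with t ht
  rw [max_eq_left ht]
end

section
/- Let β be real and let f be a solution of equation (1) on [t₁, ∞) such that f(t) < 0, f'(t) < 0, f''(t) > 0 and f'''(t) < 0 for all t ≥ t₁. Then the function ψ = f'·(−f)^{−β} satisfies ψ'(t) = f'''(t)·(−f(t))^{−β−1} < 0 for t > t₁; in particular ψ is strictly decreasing and negative on [t₁, ∞). -/
/-- If f solves f''' + f·f'' − β·(f')² = 0 on [t₁, ∞) with f < 0, f' < 0,
f'' > 0 and f''' < 0 on [t₁, ∞), then ψ = f'·(−f)^{−β} satisfies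
ψ'(t) = f'''(t)·(−f(t))^{−β−1} < 0 for t > t₁; in particular ψ is strictly
decreasing and negative on [t₁, ∞). -/
theorem stmt_12 (β : ℝ) (t₁ : ℝ)
    (f f' f'' f''' : ℝ → ℝ)
    (hf1 : ∀ t ∈ Set.Ici t₁, HasDerivAt f (f' t) t)
    (hf2 : ∀ t ∈ Set.Ici t₁, HasDerivAt f' (f'' t) t)
    (hf3 : ∀ t ∈ Set.Ici t₁, HasDerivAt f'' (f''' t) t)
    (heq : ∀ t ∈ Set.Ici t₁, f''' t + f t * f'' t - β * (f' t) ^ 2 = 0)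
    (hsigns : ∀ t ∈ Set.Ici t₁, f t < 0 ∧ f' t < 0 ∧ 0 < f'' t ∧ f''' t < 0)
    (ψ : ℝ → ℝ) (hψ : ∀ t, ψ t = f' t * (-f t) ^ (-β)) :
    (∀ t > t₁, HasDerivAt ψ (f''' t * (-f t) ^ (-β - 1)) t ∧
        f''' t * (-f t) ^ (-β - 1) < 0) ∧
    StrictAntiOn ψ (Set.Ici t₁) ∧
    ∀ t ∈ Set.Ici t₁, ψ t < 0 := by
  have hD : ∀ t ∈ Set.Ici t₁, HasDerivAt ψ (f''' t * (-f t) ^ (-β - 1)) t := by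
    intro t ht
    obtain ⟨h0, -, -, -⟩ := hsigns t ht
    have hpos : 0 < -f t := by linarith
    have h1 := (hf2 t ht).mul ((hf1 t ht).neg.rpow_const (p := -β) (Or.inl hpos.ne'))
    have hfun : ψ = f' * (fun y => (-f) y ^ (-β)) := by
      funext y
      simp [hψ y]
    rw [hfun]
    have hp : (-f t) ^ (-β) = (-f t) ^ (-β - 1) * (-f t) := by
      rw [Real.rpow_sub_one hpos.ne', div_mul_cancel₀ _ hpos.ne']
    refine h1.congr_deriv ?_
    simp only [Pi.neg_apply]
    rw [hp]
    linear_combination (-(-f t) ^ (-β - 1)) * heq t ht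
  have hneg : ∀ t ∈ Set.Ici t₁, f''' t * (-f t) ^ (-β - 1) < 0 := by
    intro t ht
    obtain ⟨h0, -, -, h3⟩ := hsigns t ht
    exact mul_neg_of_neg_of_pos h3 (Real.rpow_pos_of_pos (by linarith) _)
  refine ⟨fun t ht => ⟨hD t (le_of_lt ht), hneg t (le_of_lt ht)⟩, ?_, ?_⟩
  · apply strictAntiOn_of_deriv_neg (convex_Ici t₁)
    · exact fun t ht => (hD t ht).continuousAt.continuousWithinAt
    · intro t ht
      have ht' := interior_subset ht
      rw [(hD t ht').deriv]
      exact hneg t ht'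
  · intro t ht
    obtain ⟨h0, h1, -, -⟩ := hsigns t ht
    rw [hψ]
    exact mul_neg_of_neg_of_pos h1 (Real.rpow_pos_of_pos (by linarith) _)
end

section
/- Let β be real and let f be a solution of equation (1) on [t₁, ∞) with f(t) < 0 for all t ≥ t₁. Then for all t ≥ s ≥ t₁ one has f''(t)·(−f(t))^{−β−1} − f''(s)·(−f(s))^{−β−1} − f'(t)·(−f(t))^{−β} + f'(s)·(−f(s))^{−β} = (β + 1)·∫_s^t f'(r)·f''(r)·(−f(r))^{−β−2} dr. -/
/-- Identity (9): if f solves f''' + f·f'' − β·(f')² = 0 on [t₁, ∞) with f < 0,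
then for all t ≥ s ≥ t₁,
f''(t)(−f(t))^{−β−1} − f''(s)(−f(s))^{−β−1} − f'(t)(−f(t))^{−β} + f'(s)(−f(s))^{−β}
  = (β+1)∫_s^t f'(r) f''(r) (−f(r))^{−β−2} dr. -/
theorem stmt_13 (β : ℝ) (t₁ : ℝ)
    (f f' f'' f''' : ℝ → ℝ)
    (hf1 : ∀ t ∈ Set.Ici t₁, HasDerivAt f (f' t) t)
    (hf2 : ∀ t ∈ Set.Ici t₁, HasDerivAt f' (f'' t) t)
    (hf3 : ∀ t ∈ Set.Ici t₁, HasDerivAt f'' (f''' t) t)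
    (heq : ∀ t ∈ Set.Ici t₁, f''' t + f t * f'' t - β * (f' t) ^ 2 = 0)
    (hneg : ∀ t ∈ Set.Ici t₁, f t < 0) :
    ∀ s ≥ t₁, ∀ t ≥ s,
      f'' t * (-f t) ^ (-β - 1) - f'' s * (-f s) ^ (-β - 1)
        - f' t * (-f t) ^ (-β) + f' s * (-f s) ^ (-β)
      = (β + 1) * ∫ r in s..t, f' r * f'' r * (-f r) ^ (-β - 2) := by
  intro s hs t hst
  have mem : ∀ r ∈ Set.uIcc s t, r ∈ Set.Ici t₁ := by
    intro r hr
    rw [Set.uIcc_of_le hst] at hr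
    exact le_trans hs hr.1
  have hG : ∀ r ∈ Set.uIcc s t,
      HasDerivAt (fun x => f'' x * (-f x) ^ (-β - 1) - f' x * (-f x) ^ (-β))
        ((β + 1) * (f' r * f'' r * (-f r) ^ (-β - 2))) r := by
    intro r hr
    have hm := mem r hr
    have hpos : 0 < -f r := by linarith [hneg r hm]
    have hg : HasDerivAt (fun x => -f x) (-f' r) r := (hf1 r hm).neg
    have h1 := (hf3 r hm).mul (hg.rpow_const (p := -β - 1) (Or.inl hpos.ne'))
    have h2 := (hf2 r hm).mul (hg.rpow_const (p := -β) (Or.inl hpos.ne'))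
    refine (h1.sub h2).congr_deriv ?_
    have e1 : (-f r) ^ (-β) = (-f r) ^ (-β - 1) * (-f r) := by
      rw [← Real.rpow_add_one hpos.ne']; congr 1; ring
    have e2 : (-β - 1 - 1 : ℝ) = -β - 2 := by ring
    have e3 : f''' r = β * (f' r) ^ 2 - f r * f'' r := by linarith [heq r hm]
    rw [e2, e1, e3]
    ring
  have hc : ContinuousOn (fun r => (β + 1) * (f' r * f'' r * (-f r) ^ (-β - 2)))
      (Set.uIcc s t) := by
    intro r hr
    have hm := mem r hr
    have hpos : 0 < -f r := by linarith [hneg r hm]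
    exact (continuousAt_const.mul (((hf2 r hm).continuousAt.mul (hf3 r hm).continuousAt).mul
      ((hf1 r hm).continuousAt.neg.rpow_const (Or.inl hpos.ne')))).continuousWithinAt
  have key := intervalIntegral.integral_eq_sub_of_hasDerivAt hG hc.intervalIntegrable
  rw [intervalIntegral.integral_const_mul] at key
  rw [key]
  ring
end

section
/- Let β < 0 and let f be a non-constant unbounded solution of equation (1) on [t₀, ∞) satisfying condition (2), such that f is negative at infinity (i.e. f(t) < 0 for all sufficiently large t). Then f'(t)·(−f(t))^{−β} converges as t → ∞ to a finite limit l₀ with l₀ < 0. -/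
open Filter Set Topology

lemma aux_persist (T : ℝ) (g h h' : ℝ → ℝ) (hd : ∀ t ≥ T, HasDerivAt h (h' t) t)
    (hg : ∀ t ≥ T, 0 < g t) (hge : ∀ t ≥ T, g t * h t ≤ h' t) (t₁ : ℝ) (ht₁ : T ≤ t₁)
    (hpos : 0 < h t₁) : ∀ t ≥ t₁, h t₁ ≤ h t := by
  intro t ht
  have key := image_le_of_deriv_right_lt_deriv_boundary' (f := fun _ => h t₁) (f' := fun _ => 0)
    (a := t₁) (b := t) (B := h) (B' := h') continuousOn_const
    (fun x _ => hasDerivWithinAt_const _ _ _) le_rfl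
    (fun x hx => (hd x (ht₁.trans hx.1)).continuousAt.continuousWithinAt)
    (fun x hx => (hd x (ht₁.trans hx.1)).hasDerivWithinAt)
    (by
      intro x hx hxe
      have h1 := hge x (ht₁.trans hx.1)
      have h2 := hg x (ht₁.trans hx.1)
      rw [← hxe] at h1
      have := mul_pos h2 hpos
      linarith)
  exact key ⟨ht, le_rfl⟩

lemma aux_mono_s14 (T : ℝ) (p q : ℝ → ℝ) (hd : ∀ t ≥ T, HasDerivAt p (q t) t)
    (hq : ∀ t ≥ T, 0 ≤ q t) : MonotoneOn p (Ici T) := by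
  apply monotoneOn_of_deriv_nonneg (convex_Ici T)
  · exact fun x hx => (hd x hx).continuousAt.continuousWithinAt
  · intro x hx
    rw [interior_Ici] at hx
    exact (hd x (le_of_lt hx)).differentiableAt.differentiableWithinAt
  · intro x hx
    rw [interior_Ici] at hx
    rw [(hd x (le_of_lt hx)).deriv]
    exact hq x (le_of_lt hx)

lemma aux_tendsto (T c : ℝ) (hc : 0 < c) (p q : ℝ → ℝ) (hd : ∀ t ≥ T, HasDerivAt p (q t) t)
    (hq : ∀ t ≥ T, c ≤ q t) : Tendsto p atTop atTop := by
  have hm := aux_mono_s14 T (fun t => p t - c * t) (fun t => q t - c * 1)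
    (fun t ht => (hd t ht).sub ((hasDerivAt_id t).const_mul c))
    (fun t ht => by have := hq t ht; linarith)
  have h1 : Tendsto (fun t : ℝ => (p T - c * T) + c * t) atTop atTop :=
    tendsto_atTop_add_const_left _ _ (tendsto_id.const_mul_atTop hc)
  refine tendsto_atTop_mono' _ ?_ h1
  filter_upwards [eventually_ge_atTop T] with t ht
  have := hm (self_mem_Ici) ht ht
  simp only at this
  linarith

lemma aux_core (b : ℝ) (hb : 0 < b) (T : ℝ) (g g1 g2 g3 : ℝ → ℝ)
    (d0 : ∀ t ≥ T, HasDerivAt g (g1 t) t)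
    (d1 : ∀ t ≥ T, HasDerivAt g1 (g2 t) t)
    (d2 : ∀ t ≥ T, HasDerivAt g2 (g3 t) t)
    (heq : ∀ t ≥ T, g3 t = g t * g2 t + b * (g1 t) ^ 2)
    (hunb : ¬ ∃ M : ℝ, ∀ t ≥ T, g t ≤ M)
    (hlim : Tendsto g1 atTop (𝓝 0))
    (hpos : ∀ t ≥ T, 0 < g t) :
    ∃ l > 0, Tendsto (fun t => g1 t * (g t) ^ b) atTop (𝓝 l) := by
  have n2 : ∀ t ≥ T, g2 t ≤ 0 := by
    intro t₁ ht₁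
    by_contra! hc
    have hp := aux_persist T g g2 g3 d2 hpos
      (fun t ht => by rw [heq t ht]; have := sq_nonneg (g1 t); nlinarith) t₁ ht₁ hc
    have := aux_tendsto t₁ _ hc g1 g2 (fun t ht => d1 t (ht₁.trans ht)) hp
    exact not_tendsto_nhds_of_tendsto_atTop this _ hlim
  have anti1 : ∀ s ≥ T, ∀ t ≥ s, g1 t ≤ g1 s := by
    intro s hs t ht
    have := aux_mono_s14 T (fun t => - g1 t) (fun t => - g2 t) (fun t ht => (d1 t ht).neg)
      (fun t ht => by have := n2 t ht; linarith) hs (hs.le.trans ht) ht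
    simpa using this
  have p1' : ∀ t ≥ T, 0 ≤ g1 t := by
    intro t ht
    refine le_of_tendsto hlim ?_
    filter_upwards [eventually_ge_atTop t] with s hs using anti1 t ht s hs
  have mono0 := aux_mono_s14 T g g1 d0 p1'
  have p1 : ∀ t ≥ T, 0 < g1 t := by
    intro t ht
    refine lt_of_le_of_ne (p1' t ht) (fun h0 => hunb ⟨g t, ?_⟩)
    have hz := aux_mono_s14 t (fun s => - g s) (fun s => - g1 s) (fun s hs => (d0 s (ht.le.trans hs)).neg)
      (fun s hs => by have := anti1 t ht s hs; linarith)
    intro s hs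
    rcases le_total s t with h | h
    · exact mono0 hs ht h
    · have := hz self_mem_Ici h h
      simpa using this
  have p3 : ∀ t ≥ T, 0 ≤ g3 t := by
    intro t₁ ht₁
    by_contra! hc
    have hp := aux_persist T g (fun t => -(g t * g2 t + b * (g1 t) ^ 2))
      (fun t => -((g1 t * g2 t + g t * g3 t) + b * (((2 : ℕ) : ℝ) * g1 t ^ (2 - 1) * g2 t)))
      (fun t ht => (((d0 t ht).mul (d2 t ht)).add (((d1 t ht).pow 2).const_mul b)).neg) hpos
      (fun t ht => by
        rw [← heq t ht]
        have := mul_nonneg (p1' t ht) (neg_nonneg.2 (n2 t ht))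
        have h2 := mul_nonneg hb.le this
        norm_num
        nlinarith) t₁ ht₁ (by simp only [← heq t₁ ht₁]; linarith)
    have hT2 := aux_tendsto t₁ (- g3 t₁) (by linarith) (fun t => - g2 t) (fun t => - g3 t)
      (fun t ht => (d2 t (ht₁.le.trans ht)).neg) (fun t ht => by
        have := hp t ht
        simp only [← heq t₁ ht₁, ← heq t (ht₁.le.trans ht)] at this
        exact this)
    obtain ⟨T2, hT2⟩ := eventually_atTop.1 (hT2.eventually_ge_atTop 1)
    have hT1 := aux_tendsto (max T T2) 1 one_pos (fun t => - g1 t) (fun t => - g2 t)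
      (fun t ht => (d1 t ((le_max_left _ _).trans ht)).neg)
      (fun t ht => hT2 t ((le_max_right _ _).trans ht))
    exact not_tendsto_nhds_of_tendsto_atTop hT1 _ hlim.neg
  -- the logarithm of the quantity
  have dL : ∀ t ≥ T, HasDerivAt (fun t => Real.log (g1 t) + b * Real.log (g t))
      (g3 t / (g t * g1 t)) t := by
    intro t ht
    have h1 := p1 t ht
    have h0 := hpos t ht
    have := ((d1 t ht).log h1.ne').add (((d0 t ht).log h0.ne').const_mul b)
    refine this.congr_deriv ?_
    rw [heq t ht]
    field_simp
  have mL := aux_mono_s14 T _ _ dL (fun t ht =>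
    div_nonneg (p3 t ht) (mul_pos (hpos t ht) (p1 t ht)).le)
  set M := g1 T with hM
  have dW : ∀ t ≥ T, HasDerivAt (fun t => -(Real.log (g1 t) + b * Real.log (g t))
      + g2 t / (g t * g1 t) - b ^ 2 * M / 2 * (g t ^ 2)⁻¹)
      (-(g3 t / (g t * g1 t)) + (g3 t * (g t * g1 t) - g2 t * (g1 t * g1 t + g t * g2 t)) /
        (g t * g1 t) ^ 2 - b ^ 2 * M / 2 *
          (-(((2 : ℕ) : ℝ) * g t ^ (2 - 1) * g1 t) / (g t ^ 2) ^ 2)) t := by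
    intro t ht
    have h1 := p1 t ht
    have h0 := hpos t ht
    exact ((dL t ht).neg.add ((d2 t ht).div ((d0 t ht).mul (d1 t ht)) (mul_pos h0 h1).ne')).sub
      ((((d0 t ht).pow 2).inv (pow_pos h0 2).ne').const_mul _)
  have mW := aux_mono_s14 T _ _ dW (by
    intro t ht
    have h1 := p1 t ht
    have h0 := hpos t ht
    have h2 := n2 t ht
    have h3 := p3 t ht
    rw [heq t ht] at h3
    have hMt : g1 t ≤ M := anti1 T le_rfl t ht
    have e : (-(g3 t / (g t * g1 t)) + (g3 t * (g t * g1 t) - g2 t * (g1 t * g1 t + g t * g2 t)) /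
        (g t * g1 t) ^ 2 - b ^ 2 * M / 2 *
          (-(((2 : ℕ) : ℝ) * g t ^ (2 - 1) * g1 t) / (g t ^ 2) ^ 2))
        = (-(g2 t) * g t * g1 t ^ 2 + (b ^ 2 * M * g1 t ^ 3 - (g t * g2 t) ^ 2)) /
          (g t ^ 3 * g1 t ^ 2) := by
      norm_num
      field_simp
      ring
    rw [e]
    apply div_nonneg _ (by positivity)
    have k1 : 0 ≤ -(g2 t) * g t * g1 t ^ 2 := by
      have : 0 ≤ -(g2 t) := by linarith
      positivity
    have k2 : (g t * g2 t) ^ 2 ≤ (b * g1 t ^ 2) ^ 2 := by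
      apply sq_le_sq'
      · linarith
      · have : g t * g2 t ≤ 0 := mul_nonpos_of_nonneg_of_nonpos h0.le h2
        have : 0 ≤ b * g1 t ^ 2 := by positivity
        linarith
    have k3 : (b * g1 t ^ 2) ^ 2 ≤ b ^ 2 * M * g1 t ^ 3 := by
      have : 0 ≤ b ^ 2 * g1 t ^ 3 * (M - g1 t) :=
        mul_nonneg (by positivity) (by linarith)
      nlinarith
    linarith)
  -- bounded above
  obtain ⟨C, hC⟩ : ∃ C, ∀ t ≥ T, Real.log (g1 t) + b * Real.log (g t) ≤ C := by
    refine ⟨-(-(Real.log (g1 T) + b * Real.log (g T))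
      + g2 T / (g T * g1 T) - b ^ 2 * M / 2 * (g T ^ 2)⁻¹), fun t ht => ?_⟩
    have := mW self_mem_Ici ht ht
    simp only at this
    have a1 : g2 t / (g t * g1 t) ≤ 0 :=
      div_nonpos_of_nonpos_of_nonneg (n2 t ht) (mul_pos (hpos t ht) (p1 t ht)).le
    have a2 : 0 ≤ b ^ 2 * M / 2 * (g t ^ 2)⁻¹ := by
      have := p1 T le_rfl
      positivity
    linarith
  have mono' : Monotone (fun t => Real.log (g1 (max T t)) + b * Real.log (g (max T t))) := by
    intro s t hst
    exact mL (mem_Ici.2 (le_max_left _ _)) (mem_Ici.2 (le_max_left _ _)) (max_le_max le_rfl hst)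
  have tl := tendsto_atTop_ciSup mono' ⟨C, by rintro _ ⟨t, rfl⟩; exact hC _ (le_max_left _ _)⟩
  refine ⟨_, Real.exp_pos _, ((Real.continuous_exp.tendsto _).comp tl).congr' ?_⟩
  filter_upwards [eventually_ge_atTop T] with t ht
  simp only [Function.comp, max_eq_right ht]
  rw [Real.exp_add, Real.exp_log (p1 t ht), Real.rpow_def_of_pos (hpos t ht), mul_comm b]



/-- Let β < 0 and f be a non-constant unbounded solution of
f''' + f·f'' − β·(f')² = 0 on [t₀, ∞) with f'(t) → 0 at infinity and f negative
at infinity.  Then f'(t)·(−f(t))^{−β} converges to a finite negative limit l₀. -/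
theorem stmt_14 (β : ℝ) (hβ : β < 0) (t₀ : ℝ)
    (f f' f'' f''' : ℝ → ℝ)
    (hf1 : ∀ t ∈ Set.Ici t₀, HasDerivAt f (f' t) t)
    (hf2 : ∀ t ∈ Set.Ici t₀, HasDerivAt f' (f'' t) t)
    (hf3 : ∀ t ∈ Set.Ici t₀, HasDerivAt f'' (f''' t) t)
    (heq : ∀ t ∈ Set.Ici t₀, f''' t + f t * f'' t - β * (f' t) ^ 2 = 0)
    (hnc : ¬ ∃ c : ℝ, ∀ t ∈ Set.Ici t₀, f t = c)
    (hunb : ¬ ∃ M : ℝ, ∀ t ∈ Set.Ici t₀, |f t| ≤ M)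
    (hlim : Filter.Tendsto f' Filter.atTop (nhds 0))
    (hneginf : ∀ᶠ t in Filter.atTop, f t < 0) :
    ∃ l₀ < 0, Filter.Tendsto (fun t => f' t * (-f t) ^ (-β))
      Filter.atTop (nhds l₀) := by
  obtain ⟨T₁, hT₁⟩ := eventually_atTop.1 hneginf
  have hT0 : t₀ ≤ max t₀ T₁ := le_max_left _ _
  obtain ⟨l, hl, ht⟩ := aux_core (-β) (by linarith) (max t₀ T₁) (fun t => - f t) (fun t => - f' t)
    (fun t => - f'' t) (fun t => - f''' t)
    (fun t ht => (hf1 t (hT0.trans ht)).neg)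
    (fun t ht => (hf2 t (hT0.trans ht)).neg)
    (fun t ht => (hf3 t (hT0.trans ht)).neg)
    (fun t ht => by have := heq t (hT0.trans ht); linear_combination -this)
    (by
      rintro ⟨M, hM⟩
      apply hunb
      have hc : ContinuousOn f (Icc t₀ (max t₀ T₁)) :=
        fun x hx => (hf1 x hx.1).continuousAt.continuousWithinAt
      obtain ⟨C, hC⟩ := isCompact_Icc.exists_bound_of_continuousOn hc
      refine ⟨max C M, fun t ht => ?_⟩
      rcases le_total t (max t₀ T₁) with h | h
      · exact (hC t ⟨ht, h⟩).trans (le_max_left _ _)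
      · rw [abs_of_neg (hT₁ t ((le_max_right _ _).trans h))]
        exact (hM t h).trans (le_max_right _ _))
    (by simpa using hlim.neg)
    (fun t ht => by have := hT₁ t ((le_max_right _ _).trans ht); linarith)
  refine ⟨-l, by linarith, ht.neg.congr (fun t => by ring)⟩
end

section
/- Let β = −1 and let f be a solution of equation (1) on [t₀, ∞). Then the function f'' + f·f' is constant on [t₀, ∞). Moreover, if f is non-constant, unbounded and satisfies condition (2), and l denotes the constant value of f'' + f·f', then l ≠ 0 and |f(t)| / √t → √(2·|l|) as t → ∞. -/
theorem const_aux (t₀ : ℝ) (g : ℝ → ℝ) (hg : ∀ t ∈ Set.Ici t₀, HasDerivAt g 0 t) :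
    ∀ t ∈ Set.Ici t₀, g t = g t₀ := by
  intro t ht
  refine constant_of_has_deriv_right_zero (a := t₀) (b := t)
    (fun x hx => (hg x hx.1).continuousAt.continuousWithinAt)
    (fun x hx => (hg x hx.1).hasDerivWithinAt) t ⟨ht, le_refl t⟩

/-- Remark 4: for β = −1, if f solves f''' + f·f'' − β·(f')² = 0 on [t₀, ∞),
then f'' + f·f' is constant on [t₀, ∞); and if moreover f is non-constant,
unbounded and f'(t) → 0 at infinity, then the constant value l of f'' + f·f'
is nonzero and |f(t)|/√t → √(2|l|) as t → ∞. -/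
theorem stmt_15 (β : ℝ) (hβ : β = -1) (t₀ : ℝ)
    (f f' f'' f''' : ℝ → ℝ)
    (hf1 : ∀ t ∈ Set.Ici t₀, HasDerivAt f (f' t) t)
    (hf2 : ∀ t ∈ Set.Ici t₀, HasDerivAt f' (f'' t) t)
    (hf3 : ∀ t ∈ Set.Ici t₀, HasDerivAt f'' (f''' t) t)
    (heq : ∀ t ∈ Set.Ici t₀, f''' t + f t * f'' t - β * (f' t) ^ 2 = 0) :
    (∃ l : ℝ, ∀ t ∈ Set.Ici t₀, f'' t + f t * f' t = l) ∧
    ((¬ ∃ c : ℝ, ∀ t ∈ Set.Ici t₀, f t = c) →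
     (¬ ∃ M : ℝ, ∀ t ∈ Set.Ici t₀, |f t| ≤ M) →
     Filter.Tendsto f' Filter.atTop (nhds 0) →
     ∀ l : ℝ, (∀ t ∈ Set.Ici t₀, f'' t + f t * f' t = l) →
       l ≠ 0 ∧
       Filter.Tendsto (fun t => |f t| / Real.sqrt t) Filter.atTop
         (nhds (Real.sqrt (2 * |l|)))) := by
  subst hβ
  constructor
  · refine ⟨f'' t₀ + f t₀ * f' t₀, const_aux t₀ (fun t => f'' t + f t * f' t) ?_⟩
    intro t ht
    have h := (hf3 t ht).add ((hf1 t ht).mul (hf2 t ht))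
    refine h.congr_deriv ?_
    have := heq t ht
    linarith
  · intro _ hub hlim l hl
    obtain ⟨c, hc⟩ : ∃ c : ℝ, ∀ t ∈ Set.Ici t₀, f t ^ 2 = 2 * l * t + c - 2 * f' t := by
      refine ⟨2 * f' t₀ + f t₀ ^ 2 - 2 * l * t₀, ?_⟩
      intro t ht
      have h := const_aux t₀ (fun t => 2 * f' t + f t ^ 2 - 2 * l * t) (by
        intro t ht
        have h := (((hf2 t ht).const_mul 2).add ((hf1 t ht).pow 2)).sub
          ((hasDerivAt_id t).const_mul (2 * l))
        refine h.congr_deriv ?_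
        have := hl t ht
        simp
        linarith) t ht
      linarith
    have hT : Filter.Tendsto (fun t => f t ^ 2 / t) Filter.atTop (nhds (2 * l)) := by
      have h1 : Filter.Tendsto (fun t : ℝ => 2 * l + (c - 2 * f' t) * t⁻¹) Filter.atTop
          (nhds (2 * l + (c - 2 * 0) * 0)) :=
        ((hlim.const_mul 2).const_sub c |>.mul tendsto_inv_atTop_zero).const_add (2 * l)
      rw [mul_zero, add_zero] at h1
      refine h1.congr' ?_
      filter_upwards [Filter.eventually_ge_atTop t₀, Filter.eventually_gt_atTop 0] with t ht h0
      rw [hc t ht]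
      field_simp
      ring
    have hl0 : 0 ≤ 2 * l := by
      refine ge_of_tendsto hT ?_
      filter_upwards [Filter.eventually_gt_atTop 0] with t h0
      positivity
    have hl0' : 0 ≤ l := by linarith
    refine ⟨?_, ?_⟩
    · rintro rfl
      apply hub
      have h1 : ∀ᶠ t in Filter.atTop, -1 < f' t := hlim.eventually (lt_mem_nhds (by norm_num))
      obtain ⟨T, hT1⟩ := Filter.eventually_atTop.1 h1
      obtain ⟨M, hM⟩ := (isCompact_Icc (a := t₀) (b := T)).exists_bound_of_continuousOn
        (f := f) (fun x hx => (hf1 x hx.1).continuousAt.continuousWithinAt)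
      refine ⟨max M (Real.sqrt (c + 2)), fun t ht => ?_⟩
      rcases le_total t T with h | h
      · exact le_max_of_le_left (hM t ⟨ht, h⟩)
      · refine le_max_of_le_right (Real.abs_le_sqrt ?_)
        have := hc t ht
        have := hT1 t h
        linarith
    · rw [abs_of_nonneg hl0']
      refine ((Real.continuous_sqrt.tendsto _).comp hT).congr ?_
      intro t
      simp only [Function.comp]
      rw [Real.sqrt_div (sq_nonneg _), Real.sqrt_sq_eq_abs]
end

section
/- Let β be a real number with β ≠ 2 and let τ ∈ ℝ. Then the function g(t) = 6 / ((2 − β)·(t − τ)) is a solution of equation (1) on (τ, ∞) and satisfies condition (2); moreover g is bounded on [t₀, ∞) for every t₀ > τ. -/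
theorem aux_deriv (a τ t : ℝ) (n : ℕ) (h : τ < t) :
    HasDerivAt (fun x : ℝ => a * ((x - τ)⁻¹) ^ (n + 1))
      (-(a * (n + 1)) * ((t - τ)⁻¹) ^ (n + 2)) t := by
  have h0 : t - τ ≠ 0 := (sub_pos.2 h).ne'
  have h1 := ((((hasDerivAt_id t).sub_const τ).fun_inv h0).fun_pow (n + 1)).const_mul a
  refine h1.congr_deriv ?_
  simp only [id, Nat.add_sub_cancel]
  push_cast
  rw [div_eq_mul_inv, ← inv_pow]
  ring

/-- Remark 5: for β ≠ 2 and τ ∈ ℝ, the function g(t) = 6/((2−β)(t−τ)) is a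
solution of f''' + f·f'' − β·(f')² = 0 on (τ, ∞), satisfies g'(t) → 0 at
infinity, and is bounded on [t₀, ∞) for every t₀ > τ. -/
theorem stmt_16 (β : ℝ) (hβ : β ≠ 2) (τ : ℝ)
    (g : ℝ → ℝ) (hg : ∀ t, g t = 6 / ((2 - β) * (t - τ))) :
    (∃ g' g'' g''' : ℝ → ℝ,
      (∀ t ∈ Set.Ioi τ, HasDerivAt g (g' t) t) ∧
      (∀ t ∈ Set.Ioi τ, HasDerivAt g' (g'' t) t) ∧
      (∀ t ∈ Set.Ioi τ, HasDerivAt g'' (g''' t) t) ∧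
      (∀ t ∈ Set.Ioi τ, g''' t + g t * g'' t - β * (g' t) ^ 2 = 0) ∧
      Filter.Tendsto g' Filter.atTop (nhds 0)) ∧
    ∀ t₀ > τ, ∃ M : ℝ, ∀ t ∈ Set.Ici t₀, |g t| ≤ M := by
  have hb : (2 - β) ≠ 0 := sub_ne_zero.2 (Ne.symm hβ)
  obtain ⟨c, hc⟩ : ∃ c : ℝ, c = 6 / (2 - β) := ⟨_, rfl⟩
  have hc2 : (2 - β) * c = 6 := by rw [hc]; field_simp
  have hgc : ∀ t, g t = c * ((t - τ)⁻¹) ^ (0 + 1) := by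
    intro t
    rw [hg, hc, zero_add, pow_one, ← div_eq_mul_inv, div_div]
  have hge : g = fun t => c * ((t - τ)⁻¹) ^ (0 + 1) := funext hgc
  refine ⟨⟨fun t => (-c) * ((t - τ)⁻¹) ^ (1 + 1), fun t => (2 * c) * ((t - τ)⁻¹) ^ (2 + 1),
    fun t => (-6 * c) * ((t - τ)⁻¹) ^ (3 + 1), ?_, ?_, ?_, ?_, ?_⟩, ?_⟩
  · intro t ht
    rw [hge]
    convert aux_deriv c τ t 0 ht using 1
    push_cast
    ring
  · intro t ht
    convert aux_deriv (-c) τ t 1 ht using 1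
    push_cast
    ring
  · intro t ht
    convert aux_deriv (2 * c) τ t 2 ht using 1
    push_cast
    ring
  · intro t _
    simp only [hgc]
    linear_combination c * ((t - τ)⁻¹) ^ 4 * hc2
  · have h1 : Filter.Tendsto (fun t : ℝ => (t - τ)⁻¹) Filter.atTop (nhds 0) :=
      tendsto_inv_atTop_zero.comp (Filter.tendsto_atTop_add_const_right _ (-τ) Filter.tendsto_id)
    simpa using (h1.pow (1 + 1)).const_mul (-c)
  · intro t₀ h0
    refine ⟨|c| * (t₀ - τ)⁻¹, fun t ht => ?_⟩
    have h1 : 0 < t₀ - τ := sub_pos.2 h0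
    have h2 : t₀ - τ ≤ t - τ := sub_le_sub_right ht τ
    rw [hgc, zero_add, pow_one, abs_mul, abs_of_pos (inv_pos.2 (h1.trans_le h2))]
    gcongr
end

section
/- Let β ≥ 0 and let f be a non-constant solution of equation (1) on [t₀, ∞) satisfying condition (2). Then f is bounded on [t₀, ∞). -/
lemma mono_aux (a : ℝ) (g g' : ℝ → ℝ) (h : ∀ t, a ≤ t → HasDerivAt g (g' t) t)
    (h0 : ∀ t, a ≤ t → 0 ≤ g' t) : ∀ s t, a ≤ s → s ≤ t → g s ≤ g t := by
  have : MonotoneOn g (Set.Ici a) := by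
    apply monotoneOn_of_deriv_nonneg (convex_Ici a)
    · intro t ht
      exact (h t ht).continuousAt.continuousWithinAt
    · intro t ht
      rw [interior_Ici] at ht
      exact (h t (le_of_lt ht)).differentiableAt.differentiableWithinAt
    · intro t ht
      rw [interior_Ici] at ht
      rw [(h t (le_of_lt ht)).deriv]
      exact h0 t (le_of_lt ht)
  intro s t hs hst
  exact this hs (le_trans hs hst) hst

lemma anti_aux (a : ℝ) (g g' : ℝ → ℝ) (h : ∀ t, a ≤ t → HasDerivAt g (g' t) t)
    (h0 : ∀ t, a ≤ t → g' t ≤ 0) : ∀ s t, a ≤ s → s ≤ t → g t ≤ g s := by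
  intro s t hs hst
  have := mono_aux a (fun t => - g t) (fun t => - g' t) (fun t ht => (h t ht).neg)
    (fun t ht => by linarith [h0 t ht]) s t hs hst
  simpa using this

lemma extend_aux (a T : ℝ) (f : ℝ → ℝ) (hc : ∀ t, a ≤ t → ContinuousAt f t)
    (M : ℝ) (hM : ∀ t, T ≤ t → |f t| ≤ M) : ∃ M : ℝ, ∀ t ∈ Set.Ici a, |f t| ≤ M := by
  obtain ⟨C, hC⟩ := (isCompact_Icc (a := a) (b := T)).exists_bound_of_continuousOn
    (f := f) (fun t ht => (hc t ht.1).continuousWithinAt)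
  refine ⟨max C M, fun t ht => ?_⟩
  rcases le_total t T with h | h
  · exact le_trans (hC t ⟨ht, h⟩) (le_max_left _ _)
  · exact le_trans (hM t h) (le_max_right _ _)

/-- Remark 6: for β ≥ 0, every non-constant solution of
f''' + f·f'' − β·(f')² = 0 on [t₀, ∞) with f'(t) → 0 at infinity is bounded. -/
theorem stmt_17 (β : ℝ) (hβ : 0 ≤ β) (t₀ : ℝ)
    (f f' f'' f''' : ℝ → ℝ)
    (hf1 : ∀ t ∈ Set.Ici t₀, HasDerivAt f (f' t) t)
    (hf2 : ∀ t ∈ Set.Ici t₀, HasDerivAt f' (f'' t) t)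
    (hf3 : ∀ t ∈ Set.Ici t₀, HasDerivAt f'' (f''' t) t)
    (heq : ∀ t ∈ Set.Ici t₀, f''' t + f t * f'' t - β * (f' t) ^ 2 = 0)
    (hnc : ¬ ∃ c : ℝ, ∀ t ∈ Set.Ici t₀, f t = c)
    (hlim : Filter.Tendsto f' Filter.atTop (nhds 0)) :
    ∃ M : ℝ, ∀ t ∈ Set.Ici t₀, |f t| ≤ M := by
  have hc : ∀ t, t₀ ≤ t → ContinuousAt f t := fun t ht => (hf1 t ht).continuousAt
  have hsmall : ∀ ε : ℝ, 0 < ε → ∀ a : ℝ, ∃ s, a ≤ s ∧ |f' s| < ε := by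
    intro ε hε a
    have h1 := (Metric.tendsto_nhds.1 hlim) ε hε
    obtain ⟨s, hs, hs'⟩ := (h1.and (Filter.eventually_ge_atTop a)).exists
    exact ⟨s, hs', by simpa [Real.dist_eq] using hs⟩
  have hβf : ∀ t, 0 ≤ β * (f' t) ^ 2 := fun t => mul_nonneg hβ (sq_nonneg _)
  by_cases hA : ∃ T, t₀ ≤ T ∧ 0 < f'' T
  · obtain ⟨T, hT, hpos⟩ := hA
    -- sign persistence
    have hg : Continuous (fun t => f (max t t₀)) := by
      rw [continuous_iff_continuousAt]
      intro t
      exact ContinuousAt.comp (f := fun t => max t t₀) (hc _ (le_max_right t t₀))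
        (by fun_prop)
    set F : ℝ → ℝ := fun t => ∫ x in t₀..t, f (max x t₀) with hF
    have hFd : ∀ t, t₀ ≤ t → HasDerivAt F (f t) t := by
      intro t ht
      have := intervalIntegral.integral_hasDerivAt_right (hg.intervalIntegrable t₀ t)
        (hg.stronglyMeasurableAtFilter _ _) hg.continuousAt
      simpa [max_eq_left ht] using this
    have hmono := mono_aux t₀ (fun t => f'' t * Real.exp (F t))
      (fun t => f''' t * Real.exp (F t) + f'' t * (Real.exp (F t) * f t))
      (fun t ht => (hf3 t ht).mul (hFd t ht).exp) (fun t ht => by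
        have h1 := heq t ht
        have h2 : f''' t * Real.exp (F t) + f'' t * (Real.exp (F t) * f t)
          = (β * (f' t) ^ 2) * Real.exp (F t) := by
          have : β * (f' t) ^ 2 = f''' t + f t * f'' t := by linarith
          rw [this]; ring
        rw [h2]
        exact mul_nonneg (hβf t) (Real.exp_pos _).le)
    have hpos2 : ∀ t, T ≤ t → 0 < f'' t := by
      intro t ht
      have h1 := hmono T t hT ht
      have h2 : 0 < f'' T * Real.exp (F T) := mul_pos hpos (Real.exp_pos _)
      exact pos_of_mul_pos_left (lt_of_lt_of_le h2 h1) (Real.exp_pos _).le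
    have hm' := mono_aux T f' f'' (fun t ht => hf2 t (le_trans hT ht))
      (fun t ht => (hpos2 t ht).le)
    have hneg : ∀ t, T ≤ t → f' t ≤ 0 := by
      intro t ht
      by_contra hcon
      push Not at hcon
      obtain ⟨s, hs, hs'⟩ := hsmall (f' t) hcon t
      have := hm' t s ht hs
      linarith [le_abs_self (f' s)]
    have hanti := anti_aux T f f' (fun t ht => hf1 t (le_trans hT ht)) hneg
    by_cases hB : ∃ T1, T ≤ T1 ∧ f T1 < 0
    · exfalso
      obtain ⟨T1, hT1, hfn⟩ := hB
      have hm'' := mono_aux T1 f'' f''' (fun t ht => hf3 t (le_trans hT (le_trans hT1 ht)))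
        (fun t ht => by
          have h1 := heq t (le_trans hT (le_trans hT1 ht))
          have h2 := hanti T1 t hT1 ht
          have h3 := hpos2 t (le_trans hT1 ht)
          nlinarith [hβf t])
      have hcp := hpos2 T1 hT1
      have hl := mono_aux T1 (fun t => f' t - f'' T1 * t) (fun t => f'' t - f'' T1 * 1)
        (fun t ht => (hf2 t (le_trans hT (le_trans hT1 ht))).sub
          ((hasDerivAt_id t).const_mul _))
        (fun t ht => by linarith [hm'' T1 t le_rfl ht])
      have hx : T1 ≤ T1 + (1 - f' T1) / f'' T1 := by
        have := hneg T1 hT1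
        have : 0 ≤ (1 - f' T1) / f'' T1 := div_nonneg (by linarith) hcp.le
        linarith
      have h1 := hl T1 _ le_rfl hx
      have h2 := hneg _ (le_trans hT1 hx)
      have h3 : f'' T1 * ((1 - f' T1) / f'' T1) = 1 - f' T1 := by field_simp
      simp only [mul_add] at h1
      linarith
    · push Not at hB
      refine extend_aux t₀ T f hc (f T) (fun t ht => ?_)
      rw [abs_of_nonneg (hB t ht)]
      exact hanti T t le_rfl ht
  · push Not at hA
    have ha' := anti_aux t₀ f' f'' hf2 hA
    have hnn : ∀ t, t₀ ≤ t → 0 ≤ f' t := by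
      intro t ht
      by_contra hcon
      push Not at hcon
      obtain ⟨s, hs, hs'⟩ := hsmall (- f' t) (by linarith) t
      have := ha' t s ht hs
      linarith [neg_abs_le (f' s)]
    have hm := mono_aux t₀ f f' hf1 hnn
    by_cases hB : ∃ T, t₀ ≤ T ∧ 1 < f T
    · obtain ⟨T, hT, hfT⟩ := hB
      have hm2 := mono_aux T (fun t => f'' t + f' t) (fun t => f''' t + f'' t)
        (fun t ht => (hf3 t (le_trans hT ht)).add (hf2 t (le_trans hT ht)))
        (fun t ht => by
          have h1 := heq t (le_trans hT ht)
          have h2 := hm T t hT ht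
          have h3 := hA t (le_trans hT ht)
          nlinarith [hβf t])
      have hle : ∀ t, T ≤ t → f'' t + f' t ≤ 0 := by
        intro t ht
        by_contra hcon
        push Not at hcon
        obtain ⟨s, hs, hs'⟩ := hsmall _ hcon t
        have h1 := hm2 t s ht hs
        have h2 := hA s (le_trans hT (le_trans ht hs))
        linarith [le_abs_self (f' s)]
      have hl := anti_aux T (fun t => f' t + f t) (fun t => f'' t + f' t)
        (fun t ht => (hf2 t (le_trans hT ht)).add (hf1 t (le_trans hT ht))) hle
      refine extend_aux t₀ T f hc (f' T + f T) (fun t ht => ?_)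
      have h1 := hl T t le_rfl ht
      have h2 := hm T t hT ht
      have h3 := hnn t (le_trans hT ht)
      rw [abs_of_nonneg (by linarith)]
      linarith
    · push Not at hB
      refine ⟨max 1 (- f t₀), fun t ht => ?_⟩
      rw [abs_le]
      have h1 := hm t₀ t le_rfl ht
      have h2 := hB t ht
      constructor
      · linarith [le_max_right 1 (- f t₀)]
      · linarith [le_max_left 1 (- f t₀)]
end
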